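/- arXiv:2104.01644 — 6 statements merged into one kernel-verified Lean document; each statement's English description precedes it below -/
import Mathlib

section
/- For every natural number n, the determinant of the (n+1)×(n+1) matrix whose (i,j) entry (0 ≤ i,j ≤ n) is binom(i+j, j) minus 1 if j = i+1 and minus 0 otherwise, equals the Robbins number A_{n+1}; that is, det( C(i+j,j) − [j = i+1] )_{0≤i,j≤n} = ∏_{k=0}^{n} (3k+1)!/((n+1)+k)! in ℚ. -/
/-!
Let `M(i,j) = C(i+j, j) - [j = i+1]` and let `ζ` be a primitive cube root of unity. The generating
function of `M` is `(1 - v + v²) / ((1 - u - v) (1 - u v))`. Substituting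
`s = φ(u) φ(v)` with `φ(u) = (1 + ζ² u) / (1 + ζ u)` in `3 / (s⁻¹ + 1 + s)` reproduces it up to
factors depending on `u` alone and on `v` alone. Hence `M(i,j) = F (aᵢ bⱼ)`, where `aᵢ` and `bⱼ`
are polynomials of degrees `i` and `j`, with leading coefficients `dⁱ / i!` and `dʲ / j!` for
`d = ζ² - ζ`, so `d² = -3`, and `F` is the linear functional determined by
`F (f(X+1) + f(X) + f(X-1)) = 3 f(0)` (`exists_functional`, `functional_ab`). The determinant
therefore reduces to a Hankel determinant of `F` (`det_gram`), that is, to the norms of the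
orthogonal polynomials of `F`.

The functional satisfies `F (g(X+3) - g(X)) = 3 (g(2) - g(1))`. It therefore kills the image of
the second-order difference operator
`(X+1)(X+2)(f(X+3) - f(X)) + (X-1)(X-2)(f(X-3) - f(X))` (`functional_diffOp`), whose
eigenfunctions are rescaled continuous Hahn polynomials. These are given here by their three-term
recurrence `p_{n+2} = X p_{n+1} - λ_{n+1} p_n` with
`λ_n = -n² (9n² - 1) / (4 (4n² - 1))`; the eigenvalue equation, with eigenvalue `9 n (n+1)`, is
proved by induction (`eigen`). So `F (pₙ) = 0` for `n > 0`, which gives orthogonality with norms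
`λ_1 ⋯ λ_n` (`functional_p`). The factor contributed by the index `i` is
`(dⁱ / i!)² λ_1 ⋯ λ_i = (3i+1)! i! / ((2i)! (2i+1)!)`, the ratio `A_{i+1} / A_i` of Robbins numbers.
-/

open Finset

namespace RobbinsDet

open Polynomial

variable {K : Type*} [Field K]

/-! ### Polynomial sequences given by a three-term recurrence -/

/-- The polynomials `q₀ = 1`, `q₁ = d X + s`,
`q_{j+2} = c_j (d X + s_j) q_{j+1} - t_j q_j`. -/
noncomputable def recPoly (d s₁ : K) (c s t : ℕ → K) : ℕ → K[X]
  | 0 => 1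
  | 1 => C d * X + C s₁
  | j + 2 => C (c j) * ((C d * X + C (s j)) * recPoly d s₁ c s t (j + 1))
      - C (t j) * recPoly d s₁ c s t j

lemma recPoly_coeff (d s₁ : K) (c s t L : ℕ → K) (h0 : L 0 = 1) (h1 : L 1 = d)
    (h2 : ∀ j, L (j + 2) = c j * d * L (j + 1)) (j : ℕ) :
    (∀ k, j < k → (recPoly d s₁ c s t j).coeff k = 0) ∧
      (recPoly d s₁ c s t j).coeff j = L j := by
  induction j using Nat.twoStepInduction with
  | zero =>
    refine ⟨fun k hk => ?_, by simp [recPoly, h0]⟩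
    simp [recPoly, coeff_one, hk.ne']
  | one =>
    refine ⟨fun k hk => ?_, ?_⟩
    · simp only [recPoly, coeff_add, coeff_C_mul, coeff_X, coeff_C]
      rw [if_neg (by omega), if_neg (by omega)]
      simp
    · simp [recPoly, h1, coeff_C]
  | more j ih0 ih1 =>
    have key : ∀ k, (recPoly d s₁ c s t (j + 2)).coeff (k + 1) =
        c j * (d * (recPoly d s₁ c s t (j + 1)).coeff k
          + s j * (recPoly d s₁ c s t (j + 1)).coeff (k + 1))
        - t j * (recPoly d s₁ c s t j).coeff (k + 1) := by
      intro k
      simp only [recPoly, coeff_sub, coeff_C_mul, add_mul, coeff_add, mul_assoc, coeff_X_mul]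
    refine ⟨fun k hk => ?_, ?_⟩
    · obtain ⟨k, rfl⟩ : ∃ l, k = l + 1 := ⟨k - 1, by omega⟩
      rw [key, ih1.1 k (by omega), ih1.1 (k + 1) (by omega), ih0.1 (k + 1) (by omega)]
      simp
    · rw [key, ih1.2, ih1.1 (j + 1 + 1) (by omega), ih0.1 (j + 1 + 1) (by omega), h2]
      ring

/-! ### The two polynomial families attached to rows and columns -/

/-- Row polynomials: `∑ aᵢ uⁱ = (1 + ζ² u)^(X - 1) (1 + ζ u)^(-X - 1)` for a primitive cube root
of unity `ζ` and `d = ζ² - ζ`. -/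
noncomputable def aPoly (d : K) : ℕ → K[X] :=
  recPoly d 1 (fun j => ((j : K) + 2)⁻¹) (fun j => (j : K) + 2) (fun _ => 1)

/-- Column polynomials: `∑ bⱼ vʲ = ((1 + ζ² v) / (1 + ζ v))^X` for a primitive cube root
of unity `ζ` and `d = ζ² - ζ`. -/
noncomputable def bPoly (d : K) : ℕ → K[X] :=
  recPoly d 0 (fun j => ((j : K) + 2)⁻¹) (fun j => (j : K) + 1)
    (fun j => (j : K) * ((j : K) + 2)⁻¹)

/-- The norm ratios of the orthogonal polynomials `pPoly`. -/
def lam (n : ℕ) : K := -((n : K) ^ 2 * (9 * (n : K) ^ 2 - 1)) / (4 * (4 * (n : K) ^ 2 - 1))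

/-- Monic orthogonal polynomials: `p_{n+2} = X p_{n+1} - λ_{n+1} p_n`. They are rescaled
continuous Hahn polynomials. -/
noncomputable def pPoly : ℕ → K[X] :=
  recPoly 1 0 (fun _ => 1) (fun _ => 0) (fun j => lam (j + 1))

lemma pPoly_zero : (pPoly 0 : K[X]) = 1 := rfl

lemma pPoly_one : (pPoly 1 : K[X]) = X := by simp [pPoly, recPoly]

lemma pPoly_rec (n : ℕ) :
    (pPoly (n + 2) : K[X]) = X * pPoly (n + 1) - C (lam (n + 1)) * pPoly n := by
  simp [pPoly, recPoly]

variable [CharZero K]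

lemma nat_add_two_ne (j : ℕ) : (j : K) + 2 ≠ 0 := by exact_mod_cast (by omega : j + 2 ≠ 0)

lemma C_inv_mul (j : ℕ) : ((j : K[X]) + 2) * C ((j : K) + 2)⁻¹ = 1 := by
  have : ((j : K[X]) + 2) = C ((j : K) + 2) := by rw [C_add, map_natCast, map_ofNat]
  rw [this, ← C_mul, mul_inv_cancel₀ (nat_add_two_ne j), C_1]

lemma aPoly_rec (d : K) (j : ℕ) : ((j : K[X]) + 2) * aPoly d (j + 2) =
    (C d * X + ((j : K[X]) + 2)) * aPoly d (j + 1) - ((j : K[X]) + 2) * aPoly d j := by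
  have e : aPoly d (j + 2) = C ((j : K) + 2)⁻¹ *
      ((C d * X + C ((j : K) + 2)) * aPoly d (j + 1)) - C 1 * aPoly d j := rfl
  rw [e]
  simp only [C_add, C_1, map_natCast, map_ofNat]
  linear_combination (C d * X + ((j : K[X]) + 2)) * aPoly d (j + 1) * C_inv_mul (K := K) j

lemma bPoly_rec (d : K) (j : ℕ) : ((j : K[X]) + 2) * bPoly d (j + 2) =
    (C d * X + ((j : K[X]) + 1)) * bPoly d (j + 1) - (j : K[X]) * bPoly d j := by
  have e : bPoly d (j + 2) = C ((j : K) + 2)⁻¹ *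
      ((C d * X + C ((j : K) + 1)) * bPoly d (j + 1))
        - C ((j : K) * ((j : K) + 2)⁻¹) * bPoly d j := rfl
  rw [e]
  simp only [C_add, C_mul, C_1, map_natCast]
  linear_combination ((C d * X + ((j : K[X]) + 1)) * bPoly d (j + 1) - (j : K[X]) * bPoly d j)
    * C_inv_mul (K := K) j

omit [CharZero K] in
lemma bPoly_zero (d : K) : bPoly d 0 = 1 := rfl

omit [CharZero K] in
lemma bPoly_one (d : K) : bPoly d 1 = C d * X := by simp [bPoly, recPoly]

lemma lead_rec (d : K) (j : ℕ) : d ^ (j + 2) / ((j + 2).factorial : K) =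
    ((j : K) + 2)⁻¹ * d * (d ^ (j + 1) / ((j + 1).factorial : K)) := by
  have h := nat_add_two_ne (K := K) j
  have h' : ((j + 1).factorial : K) ≠ 0 := by exact_mod_cast Nat.factorial_ne_zero _
  rw [Nat.factorial_succ (j + 1)]
  push_cast
  have h'' : (j : K) + 1 + 1 ≠ 0 := by convert h using 1; ring
  field_simp
  ring

lemma aPoly_coeff (d : K) (j : ℕ) : (∀ k, j < k → (aPoly d j).coeff k = 0) ∧
    (aPoly d j).coeff j = d ^ j / (j.factorial : K) :=
  recPoly_coeff _ _ _ _ _ (fun j => d ^ j / (j.factorial : K)) (by simp) (by simp)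
    (lead_rec d) j

lemma bPoly_coeff (d : K) (j : ℕ) : (∀ k, j < k → (bPoly d j).coeff k = 0) ∧
    (bPoly d j).coeff j = d ^ j / (j.factorial : K) :=
  recPoly_coeff _ _ _ _ _ (fun j => d ^ j / (j.factorial : K)) (by simp) (by simp)
    (lead_rec d) j

omit [CharZero K] in
lemma pPoly_coeff (j : ℕ) : (∀ k, j < k → (pPoly j : K[X]).coeff k = 0) ∧
    (pPoly j : K[X]).coeff j = 1 :=
  recPoly_coeff _ _ _ _ _ (fun _ => 1) (by simp) (by simp) (by simp) j

/-! ### The linear functional -/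

/-- The coefficientwise form of `(1 + ζ v) B(X + 1, v) = (1 + ζ² v) B(X, v)` for the generating
function `B` of the `bⱼ`. -/
lemma bPoly_shift {z : K} (hz : z ^ 2 + z + 1 = 0) (j : ℕ) :
    taylor 1 (bPoly (z ^ 2 - z) (j + 1)) + C z * taylor 1 (bPoly (z ^ 2 - z) j) =
      bPoly (z ^ 2 - z) (j + 1) + C (z ^ 2) * bPoly (z ^ 2 - z) j := by
  set d := z ^ 2 - z with hd
  have hZ : (C z : K[X]) ^ 2 + C z + 1 = 0 := by
    rw [← C_pow, ← C_add, ← C_1, ← C_add, hz, C_0]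
  have hD : (C d : K[X]) = C z ^ 2 - C z := by rw [hd, C_sub, C_pow]
  have hr := bPoly_rec d
  have hE : ∀ j : ℕ, ((j : K[X]) + 2) * taylor 1 (bPoly d (j + 2)) =
      (C d * (X + 1) + ((j : K[X]) + 1)) * taylor 1 (bPoly d (j + 1))
        - (j : K[X]) * taylor 1 (bPoly d j) := by
    intro j
    have h := congrArg (taylorAlgHom (1 : K)) (hr j)
    have hx : taylorAlgHom (1 : K) X = X + 1 := by
      rw [← C_1]
      exact taylor_X 1
    have hc : taylorAlgHom (1 : K) (C d) = C d := taylor_C 1 d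
    simp only [map_mul, map_sub, map_add, map_natCast, map_ofNat, map_one, hx, hc] at h
    exact h
  have h0 : taylor 1 (bPoly d 1) + C z * taylor 1 (bPoly d 0) =
      bPoly d 1 + C (z ^ 2) * bPoly d 0 := by
    simp only [bPoly_zero, bPoly_one, taylor_mul, taylor_C, taylor_X, taylor_one, C_1, C_pow]
    rw [hD]; ring
  have h1 : taylor 1 (bPoly d 2) + C z * taylor 1 (bPoly d 1) =
      bPoly d 2 + C (z ^ 2) * bPoly d 1 := by
    have r : 2 * bPoly d 2 = (C d * X + 1) * bPoly d 1 := by simpa using hr 0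
    have e : 2 * taylor 1 (bPoly d 2) = (C d * (X + 1) + 1) * taylor 1 (bPoly d 1) := by
      simpa using hE 0
    apply mul_left_cancel₀ (two_ne_zero : (2 : K[X]) ≠ 0)
    simp only [bPoly_one, taylor_mul, taylor_C, taylor_X, C_1, C_pow] at *
    rw [hD] at r e ⊢
    linear_combination e - r + (C z ^ 2 - C z) * hZ
  induction j using Nat.twoStepInduction with
  | zero => exact h0
  | one => exact h1
  | more j ih0 ih1 =>
    have hj : ((j : K[X]) + 1 + 2) ≠ 0 := by exact_mod_cast (by omega : j + 1 + 2 ≠ 0)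
    apply mul_left_cancel₀ hj
    have r := hr j
    have e := hE j
    have r' := hr (j + 1)
    have e' := hE (j + 1)
    push_cast at r' e'
    simp only [C_pow] at ih0 ih1 ⊢
    rw [hD] at r e r' e'
    linear_combination e' + C z * e - r' - C z ^ 2 * r
      + ((C z ^ 2 - C z) * X + C z ^ 2 + j + 2) * ih1 - j * ih0
      + (bPoly d (j + 1) * (1 - C z + C z ^ 2) - taylor 1 (bPoly d (j + 1))) * hZ

/-- There is a functional whose value at `bⱼ` is the `(0, j)` entry of the matrix; it satisfies
`F (f(X + 1) + f(X) + f(X - 1)) = 3 f(0)`. -/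
lemma exists_functional {z : K} (hz : z ^ 2 + z + 1 = 0) :
    ∃ F : K[X] →ₗ[K] K, (∀ j, F (bPoly (z ^ 2 - z) j) = 1 - if j = 1 then 1 else 0) ∧
      ∀ f : K[X], F (taylor 1 f + f + taylor (-1) f) = 3 * f.eval 0 := by
  set d := z ^ 2 - z with hd
  have hd0 : d ≠ 0 := by
    intro h0
    have : d ^ 2 = -3 := by
      rw [hd]; linear_combination (z ^ 2 - 3 * z + 3) * hz
    rw [h0] at this
    norm_num at this
  have hfac : ∀ j : ℕ, d ^ j / (j.factorial : K) ≠ 0 := fun j =>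
    div_ne_zero (pow_ne_zero _ hd0) (by exact_mod_cast Nat.factorial_ne_zero _)
  let S : Polynomial.Sequence K :=
    { elems' := bPoly d
      degree_eq' := fun j => by
        apply le_antisymm
        · rw [degree_le_iff_coeff_zero]
          intro m hm
          exact (bPoly_coeff d j).1 m (by exact_mod_cast hm)
        · apply le_degree_of_ne_zero
          rw [(bPoly_coeff d j).2]
          exact hfac j }
  have hS : ∀ i, IsUnit (S i).leadingCoeff := fun i => by
    simp
  let Bs := S.basis hS
  have hBs : ∀ j, Bs j = bPoly d j := fun j => S.basis_eq_self hS j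
  let F : K[X] →ₗ[K] K := Bs.constr K (fun j => (1 : K) - if j = 1 then 1 else 0)
  have hF : ∀ j, F (bPoly d j) = 1 - if j = 1 then 1 else 0 := fun j => by
    rw [← hBs]; exact Bs.constr_basis _ _ _
  refine ⟨F, hF, ?_⟩
  let Sg : K[X] →ₗ[K] K[X] := taylor 1 + LinearMap.id + taylor (-1)
  have hSg : ∀ f, Sg f = taylor 1 f + f + taylor (-1) f := fun f => rfl
  have hb0 : ∀ j, (bPoly d (j + 1)).eval 0 = 0 := by
    intro j
    induction j using Nat.twoStepInduction with
    | zero => simp [bPoly_one]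
    | one =>
      have := congrArg (eval 0) (bPoly_rec d 0)
      simpa [bPoly_one] using this
    | more j ih0 ih1 =>
      have := congrArg (eval 0) (bPoly_rec d (j + 1))
      simp only [eval_mul, eval_sub, eval_add, ih0, ih1, mul_zero, sub_zero] at this
      refine (mul_eq_zero.mp this).resolve_left ?_
      simp only [eval_natCast, eval_ofNat]
      exact nat_add_two_ne (j + 1)
  have hrec : ∀ j, Sg (bPoly d (j + 2)) = Sg (bPoly d (j + 1)) - Sg (bPoly d j)
      + (3 : K) • (bPoly d (j + 2) - bPoly d (j + 1)) := by
    intro j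
    have hZ : (C z : K[X]) ^ 2 + C z + 1 = 0 := by
      rw [← C_pow, ← C_add, ← C_1, ← C_add, hz, C_0]
    have g0 := bPoly_shift hz j
    have g1 := bPoly_shift hz (j + 1)
    have k0 := congrArg (taylor (-1)) g0
    have k1 := congrArg (taylor (-1)) g1
    simp only [map_add, taylor_mul, taylor_taylor, taylor_C, neg_add_cancel, taylor_zero,
      C_pow, taylor_pow] at g0 g1 k0 k1
    rw [← hd] at *
    simp only [hSg, smul_eq_C_mul, map_ofNat]
    linear_combination g1 + C z ^ 2 * g0 - k1 - C z * k0
      + (2 * bPoly d (j + 1) + (1 - C z + C z ^ 2) * bPoly d j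
        - taylor 1 (bPoly d (j + 1)) + (1 - C z) * taylor 1 (bPoly d j)
        - taylor (-1) (bPoly d (j + 1)) + (1 - C z) * taylor (-1) (bPoly d j)) * hZ
  have hmain : ∀ j, F (Sg (bPoly d j)) = 3 * (bPoly d j).eval 0 := by
    intro j
    induction j using Nat.twoStepInduction with
    | zero =>
      have h1 := hF 0
      simp only [bPoly_zero] at h1 ⊢
      have : Sg (1 : K[X]) = (3 : K) • 1 := by
        simp only [hSg, taylor_one, smul_eq_C_mul, map_ofNat, C_1]; ring
      rw [this, map_smul, h1]; simp
    | one =>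
      have h1 := hF 1
      have : Sg (bPoly d 1) = (3 : K) • bPoly d 1 := by
        simp only [hSg, bPoly_one, taylor_mul, taylor_C, taylor_X, smul_eq_C_mul, map_ofNat,
          C_1, C_neg]
        ring
      rw [this, map_smul, h1, hb0 0]; simp
    | more j ih0 ih1 =>
      rw [hrec, map_add, map_sub, ih0, ih1, map_smul, map_sub, hF, hF, hb0, hb0 (j + 1)]
      rcases j with _ | j
      · simp [bPoly_zero]
      · rw [hb0]; simp
  have hlin : F ∘ₗ Sg = (3 : K) • (leval (0 : K)) := by
    refine Bs.ext fun j => ?_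
    rw [hBs, LinearMap.comp_apply, hmain]
    simp [leval_apply]
  intro f
  have := LinearMap.congr_fun hlin f
  simpa [leval_apply, hSg] using this

/-- The matrix entries. -/
def ent (i j : ℕ) : K := ((i + j).choose j : K) - if j = i + 1 then 1 else 0

omit [CharZero K] in
lemma choose_row (i j : ℕ) : ((i : K) + 1) * ((i + 1 + j).choose j : K) =
    ((i : K) + j + 1) * ((i + j).choose j : K) := by
  have h := Nat.choose_mul_succ_eq (i + j) j
  rw [show i + j + 1 - j = i + 1 by omega, show i + j + 1 = i + 1 + j by omega] at h
  have h' := congrArg (Nat.cast : ℕ → K) h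
  push_cast at h'
  linear_combination -h'

omit [CharZero K] in
lemma choose_col (i j : ℕ) : ((j : K) + 1) * ((i + (j + 1)).choose (j + 1) : K) =
    ((i : K) + j + 1) * ((i + j).choose j : K) := by
  have h' := congrArg (Nat.cast : ℕ → K) (Nat.add_one_mul_choose_eq (i + j) j)
  rw [show i + j + 1 = i + (j + 1) by omega] at h'
  push_cast at h'
  linear_combination -h'

omit [CharZero K] in
lemma ent_rec (i j : ℕ) : ((i : K) + 2) * ent (i + 2) (j + 1) =
    ((i : K) + 2) * ent (i + 1) (j + 1) - ((i : K) + 2) * ent i (j + 1)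
      + (((j : K) + 2) * ent (i + 1) (j + 2) - ((j : K) + 1) * ent (i + 1) (j + 1)
        + (j : K) * ent (i + 1) j) := by
  have c1 := choose_row (K := K) (i + 1) (j + 1)
  have c2 := choose_col (K := K) (i + 1) (j + 1)
  have c3 := choose_row (K := K) i j
  have c4 := choose_col (K := K) i j
  have c5 : ((i + 1 + (j + 1)).choose (j + 1) : K) =
      ((i + 1 + j).choose j : K) + ((i + (j + 1)).choose (j + 1) : K) := by
    rw [show i + 1 + (j + 1) = (i + 1 + j) + 1 by omega, Nat.choose_succ_succ,
      show i + 1 + j = i + (j + 1) by omega]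
    push_cast
    ring
  have key : ((i : K) + 2) * ((i + 2 + (j + 1)).choose (j + 1) : K) =
      ((i : K) + 2) * ((i + 1 + (j + 1)).choose (j + 1) : K)
      - ((i : K) + 2) * ((i + (j + 1)).choose (j + 1) : K)
      + (((j : K) + 2) * ((i + 1 + (j + 2)).choose (j + 2) : K)
        - ((j : K) + 1) * ((i + 1 + (j + 1)).choose (j + 1) : K)
        + (j : K) * ((i + 1 + j).choose j : K)) := by
    push_cast at c1 c2
    linear_combination c1 - c2 - c3 + c4 + ((j : K) - i - 1) * c5
  simp only [ent]
  rcases eq_or_ne j i with rfl | h0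
  · simp only [if_neg (show ¬ (j + 1 = j + 2 + 1) by omega),
      if_neg (show ¬ (j + 1 = j + 1 + 1) by omega), if_neg (show ¬ (j = j + 1 + 1) by omega), if_true]
    linear_combination key
  rcases eq_or_ne j (i + 1) with rfl | h1
  · simp only [if_neg (show ¬ (i + 1 + 1 = i + 2 + 1) by omega),
      if_neg (show ¬ (i + 1 + 1 = i + 1) by omega), if_neg (show ¬ (i + 1 = i + 1 + 1) by omega),
      if_neg (show ¬ (i + 1 + 2 = i + 1 + 1) by omega), if_true]
    push_cast at key ⊢
    linear_combination key
  rcases eq_or_ne j (i + 2) with rfl | h2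
  · simp only [if_neg (show ¬ (i + 2 + 1 = i + 1 + 1) by omega),
      if_neg (show ¬ (i + 2 + 1 = i + 1) by omega),
      if_neg (show ¬ (i + 2 + 2 = i + 1 + 1) by omega), if_true]
    push_cast at key ⊢
    linear_combination key
  · rw [if_neg (by omega), if_neg (by omega), if_neg (by omega), if_neg (by omega),
      if_neg (by omega)]
    linear_combination key

omit [CharZero K] in
lemma map_natCast_mul (F : K[X] →ₗ[K] K) (n : ℕ) (q : K[X]) :
    F ((n : K[X]) * q) = (n : K) * F q := by
  have e : (n : K[X]) * q = (n : K) • q := by rw [smul_eq_C_mul, map_natCast]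
  rw [e, map_smul, smul_eq_mul]

/-- Both sides satisfy the same recurrence, because multiplication by `X` can be moved from one
factor to the other. -/
lemma functional_ab {d : K} {F : K[X] →ₗ[K] K}
    (hF : ∀ j, F (bPoly d j) = 1 - if j = 1 then 1 else 0) (i j : ℕ) :
    F (aPoly d i * bPoly d j) = ent i j := by
  have hX : ∀ (q : K[X]) (j : ℕ), F (q * (C d * X * bPoly d (j + 1))) =
      ((j : K) + 2) * F (q * bPoly d (j + 2)) - ((j : K) + 1) * F (q * bPoly d (j + 1))
        + (j : K) * F (q * bPoly d j) := by
    intro q j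
    have e : q * (C d * X * bPoly d (j + 1)) =
        ((j + 2 : ℕ) : K[X]) * (q * bPoly d (j + 2))
          - ((j + 1 : ℕ) : K[X]) * (q * bPoly d (j + 1)) + (j : K[X]) * (q * bPoly d j) := by
      push_cast
      linear_combination (-q) * bPoly_rec d j
    rw [e, map_add, map_sub, map_natCast_mul, map_natCast_mul, map_natCast_mul]
    push_cast
    ring
  have hX0 : ∀ q : K[X], F (q * (C d * X * bPoly d 0)) = F (q * bPoly d 1) := by
    intro q
    rw [bPoly_zero, bPoly_one, mul_one]
  have hA : ∀ (i : ℕ) (b : K[X]), ((i : K) + 2) * F (aPoly d (i + 2) * b) =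
      F (aPoly d (i + 1) * (C d * X * b)) + ((i : K) + 2) * F (aPoly d (i + 1) * b)
        - ((i : K) + 2) * F (aPoly d i * b) := by
    intro i b
    have e : ((i + 2 : ℕ) : K[X]) * (aPoly d (i + 2) * b) =
        aPoly d (i + 1) * (C d * X * b) + ((i + 2 : ℕ) : K[X]) * (aPoly d (i + 1) * b)
          - ((i + 2 : ℕ) : K[X]) * (aPoly d i * b) := by
      push_cast
      linear_combination b * aPoly_rec d i
    have := congrArg F e
    rw [map_sub, map_add, map_natCast_mul, map_natCast_mul, map_natCast_mul] at this
    push_cast at this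
    exact this
  have ha0 : aPoly d 0 = 1 := rfl
  have ha1 : ∀ b, aPoly d 1 * b = 1 * (C d * X * b) + b := by
    intro b
    simp only [aPoly, recPoly, C_1]
    ring
  induction i using Nat.twoStepInduction generalizing j with
  | zero => simp [ha0, hF, ent]
  | one =>
    rw [ha1, map_add]
    rcases j with _ | _ | _ | j
    · rw [hX0, one_mul, hF, hF]; simp [ent]
    · rw [hX]; simp only [one_mul, hF]; norm_num [ent]
    · rw [hX]; simp only [one_mul, hF]; norm_num [ent]
    · rw [hX]; simp only [one_mul, hF, ent]
      rw [show 1 + (j + 1 + 1 + 1) = (j + 1 + 1 + 1) + 1 by omega, Nat.choose_succ_self_right]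
      simp
      ring
  | more i ih0 ih1 =>
    apply mul_left_cancel₀ (nat_add_two_ne (K := K) i)
    rcases j with _ | j
    · rw [hA, hX0, ih0, ih1, ih1]
      simp [ent]
      ring
    · rw [hA, hX, ih0, ih1, ih1, ih1, ent_rec]
      ring

/-! ### The orthogonal polynomials -/

/-- The difference operator having the `pPoly n` as eigenfunctions. -/
noncomputable def diffOp (f : K[X]) : K[X] :=
  (X + 1) * (X + 2) * (taylor 3 f - f) + (X - 1) * (X - 2) * (taylor (-3) f - f)

/-- One third of the commutator of `diffOp` with multiplication by `X`. -/
noncomputable def commOp (f : K[X]) : K[X] :=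
  (X + 1) * (X + 2) * taylor 3 f - (X - 1) * (X - 2) * taylor (-3) f

lemma lam_rec (n : ℕ) : 2 * (2 * (n : K) + 5) * lam (n + 2) - 2 * (2 * n + 1) * lam (n + 1)
    = -9 * (n + 1) * (n + 2) - 4 := by
  have h1 : 2 * (n : K) + 1 ≠ 0 := by exact_mod_cast (by omega : 2 * n + 1 ≠ 0)
  have h3 : 2 * (n : K) + 3 ≠ 0 := by exact_mod_cast (by omega : 2 * n + 3 ≠ 0)
  have h5 : 2 * (n : K) + 5 ≠ 0 := by exact_mod_cast (by omega : 2 * n + 5 ≠ 0)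
  have e1 : 4 * ((n : K) + 1) ^ 2 - 1 = (2 * n + 1) * (2 * n + 3) := by ring
  have e2 : 4 * ((n : K) + 2) ^ 2 - 1 = (2 * n + 3) * (2 * n + 5) := by ring
  simp only [lam]
  push_cast
  rw [e1, e2]
  field_simp
  ring

omit [CharZero K] in
lemma diffOp_X_mul (f : K[X]) : diffOp (X * f) = X * diffOp f + 3 * commOp f := by
  simp only [diffOp, commOp, taylor_mul, taylor_X, C_neg, map_ofNat]
  ring

omit [CharZero K] in
lemma commOp_X_mul (f : K[X]) :
    commOp (X * f) = X * commOp f + 3 * (diffOp f + (2 * X ^ 2 + 4) * f) := by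
  simp only [diffOp, commOp, taylor_mul, taylor_X, C_neg, map_ofNat]
  ring

omit [CharZero K] in
lemma diffOp_sub (c : K) (f g : K[X]) : diffOp (f - C c * g) = diffOp f - C c * diffOp g := by
  simp only [diffOp, map_sub, taylor_mul, taylor_C]
  ring

omit [CharZero K] in
lemma commOp_sub (c : K) (f g : K[X]) : commOp (f - C c * g) = commOp f - C c * commOp g := by
  simp only [commOp, map_sub, taylor_mul, taylor_C]
  ring

/-- The eigenvalue equation for `diffOp`, proved jointly with the formula for `commOp (pPoly n)`
that it forces: the double commutator of `diffOp` with `X` is again an expression in `diffOp`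
and `X`, so both statements propagate along the three-term recurrence. -/
lemma eigen (n : ℕ) :
    diffOp (pPoly n : K[X]) = 9 * (n : K[X]) * ((n : K[X]) + 1) * pPoly n ∧
    diffOp (pPoly (n + 1) : K[X]) =
      9 * ((n : K[X]) + 1) * ((n : K[X]) + 2) * pPoly (n + 1) ∧
    commOp (pPoly n : K[X]) =
      6 * (2 * (n : K[X]) + 1) * pPoly (n + 1) - 6 * (n : K[X]) * X * pPoly n ∧
    commOp (pPoly (n + 1) : K[X]) =
      6 * (2 * (n : K[X]) + 3) * pPoly (n + 2) - 6 * ((n : K[X]) + 1) * X * pPoly (n + 1) := by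
  induction n with
  | zero =>
    have hl : 3 * C (lam 1 : K) = -2 := by
      have : (3 : K) * lam 1 = -2 := by norm_num [lam]
      have := congrArg C this
      rwa [C_mul, C_neg, map_ofNat, map_ofNat] at this
    have h2 := pPoly_rec (K := K) 0
    simp only [zero_add] at h2 ⊢
    rw [h2, pPoly_zero, pPoly_one]
    simp only [diffOp, commOp, taylor_one, taylor_X, C_1, C_neg, map_ofNat, Nat.cast_zero]
    refine ⟨by ring, by ring, by ring, ?_⟩
    linear_combination 6 * hl
  | succ n ih =>
    obtain ⟨i1, i2, i3, i4⟩ := ih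
    have hl := congrArg C (lam_rec (K := K) n)
    simp only [C_mul, C_add, C_sub, C_neg, C_1, map_natCast, map_ofNat] at hl
    have r2 := pPoly_rec (K := K) n
    have r3 := pPoly_rec (K := K) (n + 1)
    have d2 := congrArg diffOp r2
    have c2 := congrArg commOp r2
    rw [diffOp_sub, diffOp_X_mul] at d2
    rw [commOp_sub, commOp_X_mul] at c2
    push_cast
    refine ⟨?_, ?_, ?_, ?_⟩
    · rw [i2]; ring
    · linear_combination d2 + X * i2 + 3 * i4 - C (lam (n + 1)) * i1
        + (-9) * (n : K[X]) * ((n : K[X]) + 1) * r2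
    · rw [i4]; ring
    · linear_combination c2 + X * i4 + 3 * i2 - C (lam (n + 1)) * i3
        + 3 * pPoly (n + 1) * hl + 6 * (n : K[X]) * X * r2 - 6 * (2 * (n : K[X]) + 5) * r3

omit [CharZero K] in
/-- The operator `diffOp f` is a difference `g(X + 3) - g(X)` with `g` vanishing at `1` and `2`,
and the functional kills every such difference. -/
lemma functional_diffOp {F : K[X] →ₗ[K] K}
    (hF : ∀ f : K[X], F (taylor 1 f + f + taylor (-1) f) = 3 * f.eval 0) (f : K[X]) :
    F (diffOp f) = 0 := by
  set g := (X - 1) * (X - 2) * (f - taylor (-3) f) with hg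
  have h := hF (taylor 1 g - taylor 2 g)
  have e : taylor 1 (taylor 1 g - taylor 2 g) + (taylor 1 g - taylor 2 g)
      + taylor (-1) (taylor 1 g - taylor 2 g) = - diffOp f := by
    have t2 : taylor (3 : K) (2 : K[X]) = 2 := by
      have := taylor_C (3 : K) 2
      rwa [map_ofNat] at this
    have h3 : taylor 3 g = (X + 2) * (X + 1) * (taylor 3 f - f) := by
      simp only [hg, taylor_mul, map_sub, taylor_X, taylor_taylor, add_neg_cancel, taylor_zero,
        taylor_one, t2, map_ofNat, C_1]
      ring
    have e1 : (1 : K) + 1 = 2 := by norm_num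
    have e2 : (1 : K) + 2 = 3 := by norm_num
    have e3 : (-1 : K) + 1 = 0 := by norm_num
    have e4 : (-1 : K) + 2 = 1 := by norm_num
    simp only [map_sub, taylor_taylor, e1, e2, e3, e4, taylor_zero, h3]
    rw [hg, diffOp]
    ring
  rw [e, map_neg] at h
  have : (taylor 1 g - taylor 2 g).eval 0 = 0 := by
    simp [taylor_eval, hg]
  rw [this] at h
  simpa using h

/-- Orthogonality: `pPoly n` is an eigenfunction with nonzero eigenvalue for `n > 0`, so `F` kills
it, and the three-term recurrence carries this to `X ^ k * pPoly n` for `k < n`. -/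
lemma functional_p {F : K[X] →ₗ[K] K} (h1 : F 1 = 1) (hD : ∀ f, F (diffOp f) = 0) (k : ℕ) :
    (∀ n, k < n → F (X ^ k * pPoly n) = 0) ∧
      F (X ^ k * pPoly k) = ∏ m ∈ range k, lam (m + 1) := by
  have h0 : ∀ n, 0 < n → F (pPoly n) = 0 := by
    intro n hn
    have h := hD (pPoly n)
    rw [(eigen n).1] at h
    have e : 9 * (n : K[X]) * ((n : K[X]) + 1) * pPoly n = (9 * (n : K) * (n + 1)) • pPoly n := by
      rw [smul_eq_C_mul, C_mul, C_mul, C_add, C_1, map_natCast, map_ofNat]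
    rw [e, map_smul, smul_eq_mul] at h
    refine (mul_eq_zero.mp h).resolve_left ?_
    exact_mod_cast (by positivity : 9 * n * (n + 1) ≠ 0)
  induction k with
  | zero => exact ⟨fun n hn => by simpa using h0 n hn, by simp [pPoly_zero, h1]⟩
  | succ k ih =>
    have key : ∀ n, F (X ^ (k + 1) * pPoly (n + 1)) =
        F (X ^ k * pPoly (n + 2)) + lam (n + 1) * F (X ^ k * pPoly n) := by
      intro n
      rw [← smul_eq_mul (a := lam (n + 1)), ← map_smul, ← map_add, pPoly_rec, smul_eq_C_mul]
      congr 1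
      ring
    refine ⟨fun n hn => ?_, ?_⟩
    · obtain ⟨n, rfl⟩ : ∃ l, n = l + 1 := ⟨n - 1, by omega⟩
      rw [key, ih.1 _ (by omega), ih.1 _ (by omega)]
      simp
    · rw [key, ih.1 _ (by omega), ih.2, prod_range_succ]
      ring

/-! ### Evaluation of the determinant -/

omit [CharZero K] in
lemma sum_coeff {N : ℕ} {q : K[X]} (hq : ∀ k, N ≤ k → q.coeff k = 0) :
    q = ∑ k : Fin N, q.coeff k • X ^ (k : ℕ) := by
  rw [Fin.sum_univ_eq_sum_range (fun k => q.coeff k • (X : K[X]) ^ k) N]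
  ext m
  simp only [finsetSum_coeff, coeff_smul, coeff_X_pow, smul_eq_mul, mul_ite, mul_one, mul_zero,
    Finset.sum_ite_eq, Finset.mem_range]
  split_ifs with h
  · rfl
  · exact hq m (by omega)

omit [CharZero K] in
/-- The matrix `F (aᵢ bⱼ)` factors through the Hankel matrix `F (X ^ (i + j))` by triangular
coefficient matrices, and so does the triangular matrix `F (X ^ i pⱼ)`. The determinant is thus
the product of the leading coefficients `la`, `lb` and of the norms `h`. -/
lemma det_gram (F : K[X] →ₗ[K] K) (a b p : ℕ → K[X]) (la lb h : ℕ → K)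
    (ha : ∀ j, (∀ k, j < k → (a j).coeff k = 0) ∧ (a j).coeff j = la j)
    (hb : ∀ j, (∀ k, j < k → (b j).coeff k = 0) ∧ (b j).coeff j = lb j)
    (hp : ∀ j, (∀ k, j < k → (p j).coeff k = 0) ∧ (p j).coeff j = 1)
    (hF : ∀ k, (∀ n, k < n → F (X ^ k * p n) = 0) ∧ F (X ^ k * p k) = h k) (N : ℕ) :
    Matrix.det (Matrix.of fun i j : Fin N => F (a i * b j)) =
      ∏ i ∈ range N, la i * lb i * h i := by
  have hdet : ∀ (c : ℕ → K[X]) (lc : ℕ → K),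
      (∀ j, (∀ k, j < k → (c j).coeff k = 0) ∧ (c j).coeff j = lc j) →
      Matrix.det (Matrix.of fun i j : Fin N => (c i).coeff j) = ∏ i ∈ range N, lc i := by
    intro c lc hc
    rw [Matrix.det_of_isLowerTriangular, ← Fin.prod_univ_eq_prod_range]
    · exact Finset.prod_congr rfl fun i _ => (hc i).2
    · intro i j hij
      exact (hc i).1 j hij
  have hexp : ∀ (c : ℕ → K[X]) (lc : ℕ → K),
      (∀ j, (∀ k, j < k → (c j).coeff k = 0) ∧ (c j).coeff j = lc j) →
      ∀ i : Fin N, c i = ∑ k : Fin N, (c i).coeff k • X ^ (k : ℕ) := fun c lc hc i =>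
    sum_coeff fun k hk => (hc i).1 k (lt_of_lt_of_le i.2 hk)
  let H : Matrix (Fin N) (Fin N) K := Matrix.of fun i j => F (X ^ (i : ℕ) * X ^ (j : ℕ))
  have hHp : Matrix.det (H * (Matrix.of fun i j : Fin N => (p i).coeff j).transpose)
      = ∏ i ∈ range N, h i := by
    have e : H * (Matrix.of fun i j : Fin N => (p i).coeff j).transpose
        = Matrix.of fun i j : Fin N => F (X ^ (i : ℕ) * p j) := by
      ext i j
      rw [Matrix.of_apply, hexp p _ hp j, Finset.mul_sum, map_sum, Matrix.mul_apply]
      refine Finset.sum_congr rfl fun k _ => ?_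
      rw [mul_smul_comm, map_smul]
      simp [H, mul_comm]
    rw [e, Matrix.det_of_isLowerTriangular, ← Fin.prod_univ_eq_prod_range]
    · exact Finset.prod_congr rfl fun i _ => (hF i).2
    · intro i j hij
      exact (hF i).1 j hij
  have hH : H.det = ∏ i ∈ range N, h i := by
    rw [Matrix.det_mul, Matrix.det_transpose, hdet p _ hp] at hHp
    simpa using hHp
  have e : (Matrix.of fun i j : Fin N => F (a i * b j)) =
      (Matrix.of fun i j : Fin N => (a i).coeff j) * H
        * (Matrix.of fun i j : Fin N => (b i).coeff j).transpose := by
    ext i j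
    rw [Matrix.of_apply, hexp a _ ha i, hexp b _ hb j, Finset.sum_mul_sum, Finset.sum_comm,
      map_sum, Matrix.mul_apply]
    refine Finset.sum_congr rfl fun l _ => ?_
    rw [Matrix.mul_apply, map_sum, Finset.sum_mul]
    refine Finset.sum_congr rfl fun k _ => ?_
    rw [smul_mul_smul_comm, map_smul]
    simp only [H, Matrix.of_apply, Matrix.transpose_apply, smul_eq_mul]
    ring
  rw [e, Matrix.det_mul, Matrix.det_mul, Matrix.det_transpose, hdet a _ ha, hdet b _ hb, hH,
    ← Finset.prod_mul_distrib, ← Finset.prod_mul_distrib]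
  exact Finset.prod_congr rfl fun i _ => by ring

lemma factorial_ne (n : ℕ) : (n.factorial : K) ≠ 0 := by
  exact_mod_cast Nat.factorial_ne_zero n

/-- The ratio `A_{i+1} / A_i` of consecutive Robbins numbers. -/
lemma term_eval {d : K} (hd : d ^ 2 = -3) (i : ℕ) :
    (d ^ i / (i.factorial : K)) * (d ^ i / (i.factorial : K)) * ∏ m ∈ range i, lam (m + 1) =
      ((3 * i + 1).factorial : K) * (i.factorial : K) /
        (((2 * i).factorial : K) * ((2 * i + 1).factorial : K)) := by
  induction i with
  | zero => simp
  | succ i ih =>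
    have e : (d ^ (i + 1) / ((i + 1).factorial : K)) * (d ^ (i + 1) / ((i + 1).factorial : K)) *
        ∏ m ∈ range (i + 1), lam (m + 1) =
        ((d ^ i / (i.factorial : K)) * (d ^ i / (i.factorial : K)) *
          ∏ m ∈ range i, lam (m + 1)) * (-3 / ((i : K) + 1) ^ 2 * lam (i + 1)) := by
      have h1 : (i : K) + 1 ≠ 0 := by exact_mod_cast (by omega : i + 1 ≠ 0)
      have h2 := factorial_ne (K := K) i
      rw [prod_range_succ, Nat.factorial_succ, ← hd]
      push_cast
      field_simp
      ring
    rw [e, ih, show 3 * (i + 1) + 1 = 3 * i + 1 + 1 + 1 + 1 by ring,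
      show 2 * (i + 1) = 2 * i + 1 + 1 by ring]
    simp only [Nat.factorial_succ, lam]
    have e1 : 4 * (((i + 1 : ℕ) : K)) ^ 2 - 1 = (2 * i + 1) * (2 * i + 1 + 1 + 1) := by
      push_cast; ring
    rw [e1]
    push_cast
    have f1 := factorial_ne (K := K) i
    have f2 := factorial_ne (K := K) (2 * i)
    have f3 := factorial_ne (K := K) (3 * i)
    have h1 : (i : K) + 1 ≠ 0 := by exact_mod_cast (by omega : i + 1 ≠ 0)
    have h2 : 2 * (i : K) + 1 ≠ 0 := by exact_mod_cast (by omega : 2 * i + 1 ≠ 0)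
    have h3 : 2 * (i : K) + 3 ≠ 0 := by exact_mod_cast (by omega : 2 * i + 3 ≠ 0)
    rw [show 2 * (i : K) + 1 + 1 + 1 = 2 * i + 3 by ring,
      show 2 * (i : K) + 1 + 1 = 2 * (i + 1) by ring]
    field_simp
    ring

lemma prod_eval {d : K} (hd : d ^ 2 = -3) (n : ℕ) :
    ∏ i ∈ range (n + 1), (d ^ i / (i.factorial : K)) * (d ^ i / (i.factorial : K)) *
      ∏ m ∈ range i, lam (m + 1) =
    ∏ k ∈ range (n + 1), ((3 * k + 1).factorial : K) / (((n + 1) + k).factorial : K) := by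
  rw [Finset.prod_congr rfl fun i _ => term_eval hd i]
  induction n with
  | zero => simp
  | succ n ih =>
    rw [prod_range_succ, ih, Finset.prod_div_distrib, Finset.prod_div_distrib,
      prod_range_succ (fun k => ((3 * k + 1).factorial : K)) (n + 1)]
    -- Both sides are the product of the factorials of `n + 1, …, 2 n + 3`.
    have key : (∏ k ∈ range (n + 1), ((n + 1 + k).factorial : K)) *
        ((2 * (n + 1)).factorial : K) * ((2 * (n + 1) + 1).factorial : K) =
        (∏ k ∈ range (n + 1 + 1), ((n + 1 + 1 + k).factorial : K)) * ((n + 1).factorial : K) := by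
      have p1 := prod_range_succ (fun k => ((n + 1 + k).factorial : K)) (n + 1 + 1)
      have p2 := prod_range_succ' (fun k => ((n + 1 + k).factorial : K)) (n + 1 + 1)
      have p3 := prod_range_succ (fun k => ((n + 1 + k).factorial : K)) (n + 1)
      rw [show 2 * (n + 1) = n + 1 + (n + 1) by ring,
        show n + 1 + (n + 1) + 1 = n + 1 + (n + 1 + 1) by ring, ← p3, ← p1, p2]
      congr 1
      exact Finset.prod_congr rfl fun k _ => by rw [show n + 1 + (k + 1) = n + 1 + 1 + k by ring]
    have q1 : (∏ k ∈ range (n + 1), ((n + 1 + k).factorial : K)) ≠ 0 :=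
      Finset.prod_ne_zero_iff.mpr fun k _ => factorial_ne _
    have q2 : (∏ k ∈ range (n + 1 + 1), ((n + 1 + 1 + k).factorial : K)) ≠ 0 :=
      Finset.prod_ne_zero_iff.mpr fun k _ => factorial_ne _
    have f1 := factorial_ne (K := K) (2 * (n + 1))
    have f2 := factorial_ne (K := K) (2 * (n + 1) + 1)
    rw [div_mul_div_comm, div_eq_div_iff (mul_ne_zero q1 (mul_ne_zero f1 f2)) q2]
    linear_combination (-(∏ k ∈ range (n + 1), ((3 * k + 1).factorial : K)) *
      ((3 * (n + 1) + 1).factorial : K)) * key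

end RobbinsDet

theorem robbins_det_binomial_minus_shift (n : ℕ) :
    Matrix.det (Matrix.of fun i j : Fin (n + 1) =>
      (Nat.choose ((i : ℕ) + (j : ℕ)) (j : ℕ) : ℚ) -
        (if (j : ℕ) = (i : ℕ) + 1 then 1 else 0)) =
    ∏ k ∈ Finset.range (n + 1),
      (Nat.factorial (3 * k + 1) : ℚ) / (Nat.factorial ((n + 1) + k) : ℚ) := by
  open RobbinsDet in
  obtain ⟨z, hz⟩ : ∃ z : ℂ, z ^ 2 + z + 1 = 0 := by
    obtain ⟨s, hs⟩ := IsAlgClosed.exists_pow_nat_eq (-3 : ℂ) (n := 2) (by norm_num)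
    exact ⟨(s - 1) / 2, by linear_combination hs / 4⟩
  obtain ⟨F, hb, hS⟩ := exists_functional hz
  have hd : (z ^ 2 - z) ^ 2 = -3 := by linear_combination (z ^ 2 - 3 * z + 3) * hz
  have h1 : F 1 = 1 := by simpa [bPoly_zero] using hb 0
  have hdet := det_gram F (aPoly (z ^ 2 - z)) (bPoly (z ^ 2 - z)) pPoly _ _ _
    (aPoly_coeff _) (bPoly_coeff _) pPoly_coeff (functional_p h1 (functional_diffOp hS)) (n + 1)
  rw [prod_eval hd] at hdet
  simp only [functional_ab hb] at hdet
  apply (algebraMap ℚ ℂ).injective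
  rw [RingHom.map_det]
  convert hdet using 1
  · congr 1
    ext i j
    simp [ent]
    split_ifs <;> simp
  · simp
end

section
/- For every natural number n, the determinant of the (n+1)×(n+1) symmetric matrix whose (i,j) entry (0 ≤ i,j ≤ n) is ∑_{m=0}^{min(i,j)} C(i+j−2m, i−m) equals the Robbins number A_{n+1} = ∏_{k=0}^{n} (3k+1)!/((n+1)+k)!. (This matrix is the coefficient matrix of the bivariate generating function 1/((1−xy)(1−x−y)).) -/
/-!
The generating function `1 / ((1 - xy)(1 - x - y))` becomes, up to factors in `x` alone and `y` alone,
a function of the product `z(x) z(y)`, where `z(x) = (1 - (1 - ω) x) / (1 - ω x)` and `ω` is a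
primitive sixth root of unity: the involutions `x ↦ 1/x` and `x ↦ 1 - x` both exchange the fixed
points `ω`, `ω⁻¹ = 1 - ω` of their product, which has order three. So the determinant is a Hankel
determinant in disguise, with continuous Hahn polynomials as orthogonal polynomials. Expanding in
powers of `Z = 1 - z(x)⁻³` and `W = 1 - z(y)³`, Barnes' first lemma predicts

  `1 / ((1 - xy)(1 - x - y)) = u₀(x) v₀(y) ∑_{k,l} (2/3)_k (4/3)_l / (k + l + 1) * Z^k/k! * W^l/l!`,

which is a factorization `A = U H Vᵀ` of the coefficient matrix with `U`, `V` triangular and `H` the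
Hilbert matrix up to row and column scaling.

The factorization is proved through the tridiagonal operator `T`, which represents `d/d(log z)` on
coefficients up to a scalar. Both `A` (`T_a`, by Pascal's rule) and `U H Vᵀ` (`T_B`, by summation by
parts and the recurrence `H_rec`) give the same result when `T` acts on the row index as when it acts
on the column index, and an array with this property is determined by its first row (`eq_of_T`).
The first rows agree (`first_row`) because the relevant series is `(1 - W)^(-1/3)`, an inverse cube
root of `z(y)³`.

The Hilbert matrix has an explicit `L D Lᵀ` factorization coming from the shifted Legendre
polynomials (`hilbert_sum`). Hence the determinant is the product of
`(3k+1)! k! / ((2k)! (2k+1)!)` over `k ≤ n` (`det_a`), which telescopes to the Robbins number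
(`robbins_prod`).
-/

open Finset

namespace RobbinsDet

/-! ### The coefficient array and its symmetry -/

/-- The array `a i j = ∑_m C(i+j-2m, i-m)`. -/
def a (i j : ℕ) : ℚ :=
  ∑ m ∈ range (min i j + 1), (Nat.choose (i + j - 2 * m) (i - m) : ℚ)

lemma a_zero_left (j : ℕ) : a 0 j = 1 := by simp [a]

lemma a_zero_right (i : ℕ) : a i 0 = 1 := by simp [a]

lemma a_succ_succ (i j : ℕ) :
    a (i + 1) (j + 1) = a i j + (Nat.choose (i + j + 2) (i + 1) : ℚ) := by
  unfold a
  rw [show min (i + 1) (j + 1) + 1 = (min i j + 1) + 1 by omega, sum_range_succ']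
  congr 1
  · refine sum_congr rfl fun m _ => ?_
    rw [show i + 1 + (j + 1) - 2 * (m + 1) = i + j - 2 * m by omega,
      show i + 1 - (m + 1) = i - m by omega]
  · rw [show i + 1 + (j + 1) - 2 * 0 = i + j + 2 by omega, Nat.sub_zero]

section Field

variable {K : Type*} [Field K]

/-- The sequence `f` shifted down by one place: `f (i - 1)`, with `f (-1) = 0`. -/
def pd (f : ℕ → K) : ℕ → K
  | 0 => 0
  | i + 1 => f i

/-- The tridiagonal operator `f ↦ (i + 1) (f (i + 1) - f i + f (i - 1))`; on generating functions it
is the first order differential operator `(1 - x + x²) d/dx + (2 x - 1)`. -/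
def T (f : ℕ → K) (i : ℕ) : K := (i + 1) * (f (i + 1) - f i + pd f i)

end Field

/-- The coefficient array looks the same to `T` in either index. -/
lemma T_a (i j : ℕ) : T (fun x => a x j) i = T (fun y => a i y) j := by
  induction i generalizing j with
  | zero =>
    cases j with
    | zero => simp [T, pd, a_zero_left, a_zero_right]
    | succ j =>
      simp only [T, pd, a_zero_left, zero_add, a_succ_succ, Nat.choose_one_right]
      push_cast; ring
  | succ i ih =>
    cases j with
    | zero =>
      simp only [T, pd, a_zero_right, zero_add, a_succ_succ]
      rw [show i + 0 + 2 = (i + 1) + 1 by omega, Nat.choose_succ_self_right]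
      push_cast; ring
    | succ j =>
      have h := ih j
      -- Passing from `(i, j)` to `(i + 1, j + 1)` changes the two sides by binomial coefficients only;
      -- the changes agree by absorption (`c1`, `c4`, `c6`) and Pascal's rule (`c3`, `c5`).
      have c1 : ((i + j + 3 : ℕ) : ℚ) * (Nat.choose (i + j + 2) (i + 1) : ℚ)
          = (Nat.choose (i + j + 3) (i + 2) : ℚ) * ((i + 2 : ℕ) : ℚ) := by
        exact_mod_cast Nat.add_one_mul_choose_eq (i + j + 2) (i + 1)
      have c3 : (Nat.choose (i + j + 3) (i + 1) : ℚ)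
          = Nat.choose (i + j + 2) i + Nat.choose (i + j + 2) (i + 1) := by
        exact_mod_cast Nat.choose_succ_succ (i + j + 2) i
      have c4 : ((i + j + 3 : ℕ) : ℚ) * (Nat.choose (i + j + 2) i : ℚ)
          = (Nat.choose (i + j + 3) (i + 1) : ℚ) * ((i + 1 : ℕ) : ℚ) := by
        exact_mod_cast Nat.add_one_mul_choose_eq (i + j + 2) i
      have c5 : (Nat.choose (i + j + 2) (i + 1) : ℚ)
          = Nat.choose (i + j + 1) i + Nat.choose (i + j + 1) (i + 1) := by
        exact_mod_cast Nat.choose_succ_succ (i + j + 1) i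
      have c6 : ((i + j + 2 : ℕ) : ℚ) * (Nat.choose (i + j + 1) i : ℚ)
          = (Nat.choose (i + j + 2) (i + 1) : ℚ) * ((i + 1 : ℕ) : ℚ) := by
        exact_mod_cast Nat.add_one_mul_choose_eq (i + j + 1) i
      have e1 : a (i + 1 + 1) (j + 1) = a (i + 1) j + Nat.choose (i + j + 3) (i + 2) := by
        rw [a_succ_succ, show i + 1 + j + 2 = i + j + 3 by omega]
      have e2 : a (i + 1) (j + 1 + 1) = a i (j + 1) + Nat.choose (i + j + 3) (i + 1) := by
        rw [a_succ_succ, show i + (j + 1) + 2 = i + j + 3 by omega]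
      have e3 := a_succ_succ i j
      have e4 : a i (j + 1) = pd (fun x => a x j) i + Nat.choose (i + j + 1) i := by
        cases i with
        | zero => simp [pd, a_zero_left]
        | succ i =>
          simp only [pd]
          rw [a_succ_succ, show i + j + 2 = i + 1 + j + 1 by omega]
      have e5 : a (i + 1) j = pd (fun y => a i y) j + Nat.choose (i + j + 1) (i + 1) := by
        cases j with
        | zero => simp [pd, a_zero_right]
        | succ j =>
          simp only [pd]
          rw [a_succ_succ, show i + j + 2 = i + (j + 1) + 1 by omega]
      have h1 : T (fun x => a x (j + 1)) (i + 1)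
          = (i + 2) * (a (i + 1 + 1) (j + 1) - a (i + 1) (j + 1) + a i (j + 1)) := by
        simp only [T, pd]; push_cast; ring
      have h2 : T (fun y => a (i + 1) y) (j + 1)
          = (j + 2) * (a (i + 1) (j + 1 + 1) - a (i + 1) (j + 1) + a (i + 1) j) := by
        simp only [T, pd]; push_cast; ring
      rw [h1, h2, e1, e2, e3]
      simp only [T] at h
      generalize pd (fun x => a x j) i = P at *
      generalize pd (fun y => a i y) j = Q at *
      push_cast at *
      have : P = a i (j + 1) - Nat.choose (i + j + 1) i := by linarith
      have : Q = a (i + 1) j - Nat.choose (i + j + 1) (i + 1) := by linarith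
      subst P Q
      linear_combination h - c1 - ((i : ℚ) + j + 3) * c3 - c4 + ((j : ℚ) + 1) * c5 + c6

/-! ### The factor series -/

section Series

open PowerSeries

variable {K : Type*} [Field K]

lemma coeff_T (f : K⟦X⟧) (i : ℕ) :
    coeff i ((1 - X + X ^ 2) * d⁄dX K f + (2 * X - 1) * f) = T (fun i => coeff i f) i := by
  have : (1 - X + X ^ 2) * d⁄dX K f + (2 * X - 1) * f
      = d⁄dX K f - X * d⁄dX K f + X * (X * d⁄dX K f) + (X * f + X * f - f) := by ring
  rw [this]
  simp only [map_add, map_sub]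
  rcases i with _ | _ | i
  · simp [T, pd, coeff_derivative]; ring
  · simp [T, pd, coeff_derivative, coeff_succ_X_mul]; ring
  · simp [T, pd, coeff_derivative, coeff_succ_X_mul]; ring

/-- `1 - ω x`. -/
noncomputable def lin (ω : K) : K⟦X⟧ := 1 - C ω * X

lemma lin_mul_inv (ω : K) : lin ω * (lin ω)⁻¹ = 1 :=
  PowerSeries.mul_inv_cancel _ (by simp [lin])

lemma d_lin (ω : K) : d⁄dX K (lin ω) = -C ω := by
  simp [lin]

lemma d_lin_inv (ω : K) : d⁄dX K (lin ω)⁻¹ = C ω * (lin ω)⁻¹ ^ 2 := by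
  rw [derivative_inv', d_lin]; ring

/-- `1 - ((1 - ω x) / (1 - (1 - ω) x))³`, the local parameter in one of the variables. -/
noncomputable def loc (ω : K) : K⟦X⟧ := 1 - lin ω ^ 3 * (lin (1 - ω))⁻¹ ^ 3

lemma one_sub_loc (ω : K) : 1 - loc ω = lin ω ^ 3 * (lin (1 - ω))⁻¹ ^ 3 := by
  simp [loc]

lemma lin_mul_lin {ω : K} (hω : ω ^ 2 - ω + 1 = 0) :
    lin ω * lin (1 - ω) = 1 - X + X ^ 2 := by
  have hw : (C ω : K⟦X⟧) ^ 2 - C ω + 1 = 0 := by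
    rw [← map_pow, ← map_sub, ← map_one C, ← map_add, hω, map_zero]
  simp only [lin, map_sub, map_one]
  linear_combination (-X ^ 2) * hw

lemma d_loc {ω : K} (hω : ω ^ 2 - ω + 1 = 0) : (1 - X + X ^ 2) * d⁄dX K (loc ω)
    = 3 * (2 * C ω - 1) * (1 - loc ω) := by
  have h := lin_mul_inv (1 - ω)
  rw [one_sub_loc, ← lin_mul_lin hω]
  simp only [loc, map_sub, Derivation.leibniz, Derivation.leibniz_pow, d_lin, d_lin_inv,
    smul_eq_mul, nsmul_eq_mul, Derivation.map_one_eq_zero, map_one]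
  have e : C ω * lin (1 - ω) - (1 - C ω) * lin ω = 2 * C ω - 1 := by
    simp only [lin, map_sub, map_one]; ring
  rw [← e]
  push_cast
  generalize (lin (1 - ω))⁻¹ = qi at *
  generalize lin (1 - ω) = q at *
  linear_combination (-3 * (1 - C ω) * lin ω ^ 4 * qi ^ 3) * h

/-- The series `g Z ^ k / k!`. -/
noncomputable def ser (g Z : K⟦X⟧) (k : ℕ) : K⟦X⟧ :=
  C ((k.factorial : K)⁻¹) * (g * Z ^ k)

/-- A first order differential operator that scales `g` and sends `Z` to a multiple of `1 - Z` acts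
bidiagonally on the series `g Z ^ k / k!`. -/
lemma T_ser [CharZero K] {g Z : K⟦X⟧} {c e : K}
    (hg : (1 - X + X ^ 2) * d⁄dX K g + (2 * X - 1) * g = C c * g)
    (hZ : (1 - X + X ^ 2) * d⁄dX K Z = C e * (1 - Z)) (k i : ℕ) :
    T (fun i => coeff i (ser g Z k)) i =
      e * pd (fun k => coeff i (ser g Z k)) k - (e * k - c) * coeff i (ser g Z k) := by
  rw [← coeff_T]
  rcases k with _ | k
  · have : (1 - X + X ^ 2) * d⁄dX K (ser g Z 0) + (2 * X - 1) * ser g Z 0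
        = C c * ser g Z 0 := by
      simpa [ser] using hg
    rw [this]
    simp [pd, coeff_C_mul]
  · have hk : (C (((k + 1).factorial : K)⁻¹) : K⟦X⟧) * (k + 1) = C ((k.factorial : K)⁻¹) := by
      have h1 : ((k.factorial : K)) ≠ 0 := by exact_mod_cast k.factorial_ne_zero
      have h2 : ((k : K) + 1) ≠ 0 := by exact_mod_cast k.succ_ne_zero
      rw [show ((k : K⟦X⟧) + 1) = C ((k : K) + 1) by simp, ← map_mul, Nat.factorial_succ]
      congr 1
      push_cast
      field_simp
    have : (1 - X + X ^ 2) * d⁄dX K (ser g Z (k + 1)) + (2 * X - 1) * ser g Z (k + 1)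
        = C e * ser g Z k - C (e * (k + 1) - c) * ser g Z (k + 1) := by
      simp only [ser, Derivation.leibniz, Derivation.leibniz_pow, smul_eq_mul, nsmul_eq_mul,
        derivative_C, Nat.add_sub_cancel, map_sub, map_mul, map_add, map_natCast, map_one,
        ← hk, mul_zero, add_zero]
      push_cast
      linear_combination (C (((k + 1).factorial : K)⁻¹) * Z ^ (k + 1)) * hg
        + (C (((k + 1).factorial : K)⁻¹) * g * (k + 1) * Z ^ k) * hZ
    rw [this, map_sub, coeff_C_mul, coeff_C_mul]
    simp [pd]

/-- The prefactor `(1 - (1 - ω) x)⁻²` of the left factor. -/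
noncomputable def u₀ (ω : K) : K⟦X⟧ := (lin (1 - ω))⁻¹ ^ 2

/-- The prefactor `(1 - (1 - ω) y) (1 - ω y)⁻³` of the right factor. -/
noncomputable def v₀ (ω : K) : K⟦X⟧ := lin (1 - ω) * (lin ω)⁻¹ ^ 3

lemma d_u₀ {ω : K} (hω : ω ^ 2 - ω + 1 = 0) :
    (1 - X + X ^ 2) * d⁄dX K (u₀ ω) + (2 * X - 1) * u₀ ω = C (1 - 2 * ω) * u₀ ω := by
  have h := lin_mul_inv (1 - ω)
  rw [← lin_mul_lin hω]
  simp only [u₀, Derivation.leibniz_pow, d_lin_inv, smul_eq_mul, nsmul_eq_mul]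
  have e : 2 * (1 - C ω) * lin ω + (2 * X - 1) * 1 = C (1 - 2 * ω) := by
    have hw : (C ω : K⟦X⟧) ^ 2 - C ω + 1 = 0 := by
      rw [← map_pow, ← map_sub, ← map_one C, ← map_add, hω, map_zero]
    simp only [lin, map_sub, map_mul, map_one, map_ofNat]
    linear_combination 2 * X * hw
  rw [← e]
  simp only [map_sub, map_one]
  push_cast
  generalize (lin (1 - ω))⁻¹ = qi at *
  generalize lin (1 - ω) = q at *
  linear_combination (2 * (1 - C ω) * lin ω * qi ^ 2) * h

lemma d_v₀ {ω : K} (hω : ω ^ 2 - ω + 1 = 0) :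
    (1 - X + X ^ 2) * d⁄dX K (v₀ ω) + (2 * X - 1) * v₀ ω = C (2 * (2 * ω - 1)) * v₀ ω := by
  have h := lin_mul_inv ω
  have hw : (C ω : K⟦X⟧) ^ 2 - C ω + 1 = 0 := by
    rw [← map_pow, ← map_sub, ← map_one C, ← map_add, hω, map_zero]
  have e : -(1 - C ω) * lin ω + 3 * C ω * lin (1 - ω) + (2 * X - 1)
      = C (2 * (2 * ω - 1)) := by
    simp only [lin, map_sub, map_mul, map_one, map_ofNat]
    linear_combination 2 * X * hw
  rw [← e, ← lin_mul_lin hω]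
  simp only [v₀, Derivation.leibniz, Derivation.leibniz_pow, d_lin_inv, d_lin,
    smul_eq_mul, nsmul_eq_mul, map_sub, map_one]
  push_cast
  generalize (lin ω)⁻¹ = pi at *
  generalize lin ω = p at *
  linear_combination (3 * C ω * lin (1 - ω) ^ 2 * pi ^ 3) * h

/-- The entries of the left triangular factor. -/
noncomputable def U (ω : K) (i k : ℕ) : K := coeff i (ser (u₀ ω) (loc ω) k)

/-- The entries of the right triangular factor. -/
noncomputable def V (ω : K) (j l : ℕ) : K := coeff j (ser (v₀ ω) (loc (1 - ω)) l)

lemma T_U [CharZero K] {ω : K} (hω : ω ^ 2 - ω + 1 = 0) (i k : ℕ) :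
    T (fun i => U ω i k) i = (3 * (2 * ω - 1)) * (pd (U ω i) k - (k + 1 / 3) * U ω i k) := by
  have hZ : (1 - X + X ^ 2) * d⁄dX K (loc ω) = C (3 * (2 * ω - 1)) * (1 - loc ω) := by
    rw [d_loc hω]; simp only [map_mul, map_sub, map_one, map_ofNat]
  refine (T_ser (d_u₀ hω) hZ k i).trans ?_
  simp only [← U.eq_1]
  ring

lemma T_V [CharZero K] {ω : K} (hω : ω ^ 2 - ω + 1 = 0) (j l : ℕ) :
    T (fun j => V ω j l) j = (3 * (2 * ω - 1)) * ((l + 2 / 3) * V ω j l - pd (V ω j) l) := by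
  have hZ : (1 - X + X ^ 2) * d⁄dX K (loc (1 - ω))
      = C (-3 * (2 * ω - 1)) * (1 - loc (1 - ω)) := by
    rw [d_loc (by linear_combination hω)]
    simp only [map_mul, map_sub, map_neg, map_one, map_ofNat]; ring
  refine (T_ser (d_v₀ hω) hZ l j).trans ?_
  simp only [← V.eq_1]
  ring

/-- `Z = 3 (2 ω - 1) x + O(x²)`. -/
lemma loc_eq (ω : K) : ∃ f : K⟦X⟧, loc ω = X * f ∧ constantCoeff f = 3 * (2 * ω - 1) := by
  refine ⟨C (2 * ω - 1) * (lin (1 - ω))⁻¹ ^ 3 * (lin ω ^ 2 + lin ω * lin (1 - ω)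
    + lin (1 - ω) ^ 2), ?_, ?_⟩
  · have h := lin_mul_inv (1 - ω)
    have e : lin (1 - ω) - lin ω = X * C (2 * ω - 1) := by
      simp only [lin, map_sub, map_mul, map_one, map_ofNat]; ring
    rw [loc, ← mul_assoc, ← mul_assoc, ← e]
    have h3 : lin (1 - ω) ^ 3 * (lin (1 - ω))⁻¹ ^ 3 = 1 := by rw [← mul_pow, h, one_pow]
    linear_combination -h3
  · simp [lin]; ring

lemma coeff_ser_of_lt (g : K⟦X⟧) (ω : K) {i k : ℕ} (h : i < k) :
    coeff i (ser g (loc ω) k) = 0 := by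
  obtain ⟨f, hf, -⟩ := loc_eq ω
  rw [ser, hf, coeff_C_mul, show g * (X * f) ^ k = X ^ k * (g * f ^ k) by ring,
    coeff_X_pow_mul', if_neg (by omega), mul_zero]

lemma coeff_ser_self (g : K⟦X⟧) (ω : K) (hg : constantCoeff g = 1) (k : ℕ) :
    coeff k (ser g (loc ω) k) = (k.factorial : K)⁻¹ * (3 * (2 * ω - 1)) ^ k := by
  obtain ⟨f, hf, hf'⟩ := loc_eq ω
  rw [ser, hf, coeff_C_mul, show g * (X * f) ^ k = X ^ k * (g * f ^ k) by ring,
    coeff_X_pow_mul', if_pos le_rfl]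
  simp [hg, hf']

lemma U_of_lt (ω : K) {i k : ℕ} (h : i < k) : U ω i k = 0 := coeff_ser_of_lt _ _ h

lemma V_of_lt (ω : K) {i k : ℕ} (h : i < k) : V ω i k = 0 := coeff_ser_of_lt _ _ h

lemma U_self (ω : K) (k : ℕ) :
    U ω k k = (k.factorial : K)⁻¹ * (3 * (2 * ω - 1)) ^ k :=
  coeff_ser_self _ _ (by simp [u₀, lin]) _

lemma V_self (ω : K) (k : ℕ) :
    V ω k k = (k.factorial : K)⁻¹ * (3 * (1 - 2 * ω)) ^ k := by
  rw [V, coeff_ser_self _ _ (by simp [v₀, lin])]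
  congr 2; ring

/-! ### The first row -/

/-- The rising factorial `c (c + 1) ⋯ (c + k - 1)`. -/
def rise (c : K) (k : ℕ) : K := ∏ m ∈ range k, (c + m)

lemma rise_succ (c : K) (k : ℕ) : rise c (k + 1) = rise c k * (c + k) := prod_range_succ _ _

lemma rise_succ' (c : K) (k : ℕ) : rise c (k + 1) = c * rise (c + 1) k := by
  rw [rise, prod_range_succ', mul_comm, rise]
  push_cast
  rw [add_zero]
  congr 1
  exact prod_congr rfl fun m _ => by ring

/-- The binomial series `(1 - x)^(-1/3)`. -/
noncomputable def bin (K : Type*) [Field K] : K⟦X⟧ :=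
  PowerSeries.mk fun k => rise (1 / 3 : K) k / (k.factorial : K)

lemma bin_cube [CharZero K] : bin K ^ 3 * (1 - X) = 1 := by
  have hd : (1 - X) * d⁄dX K (bin K) * 3 = bin K := by
    have : (1 - X) * d⁄dX K (bin K) * 3
        = C 3 * (d⁄dX K (bin K) - X * d⁄dX K (bin K)) := by
      simp only [map_ofNat]; ring
    rw [this]
    ext k
    have h1 : ((k.factorial : K)) ≠ 0 := by exact_mod_cast k.factorial_ne_zero
    have h2 : ((k : K) + 1) ≠ 0 := by exact_mod_cast k.succ_ne_zero
    have e : coeff k (d⁄dX K (bin K)) = (1 / 3 + k) * coeff k (bin K) := by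
      rw [coeff_derivative]
      simp only [bin, coeff_mk, rise_succ, Nat.factorial_succ]
      push_cast
      field_simp
    have e' : coeff k (X * d⁄dX K (bin K)) = k * coeff k (bin K) := by
      rcases k with _ | k
      · simp
      · rw [coeff_succ_X_mul, coeff_derivative]; push_cast; ring
    rw [coeff_C_mul, map_sub, e, e']
    ring
  apply derivative.ext
  · simp only [Derivation.leibniz, Derivation.leibniz_pow, smul_eq_mul, nsmul_eq_mul, map_sub,
      Derivation.map_one_eq_zero, derivative_X]
    push_cast
    linear_combination (bin K ^ 2) * hd
  · simp [bin, rise]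

/-- The generating function of the weights `(4/3)_l / ((l + 1) l!)` of the first row. -/
noncomputable def wt (K : Type*) [Field K] : K⟦X⟧ :=
  PowerSeries.mk fun l => rise (4 / 3 : K) l / ((l + 1) * l.factorial)

lemma X_mul_wt [CharZero K] : X * wt K = 3 * (bin K - 1) := by
  rw [show (3 : K⟦X⟧) = C 3 from (map_ofNat C 3).symm]
  ext k
  rcases k with _ | k
  · simp [bin, rise]
  · rw [coeff_succ_X_mul, coeff_C_mul, map_sub]
    simp only [wt, bin, coeff_mk, rise_succ', Nat.factorial_succ, coeff_one]
    norm_num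
    have h1 : ((k.factorial : K)) ≠ 0 := by exact_mod_cast k.factorial_ne_zero
    have h2 : ((k : K) + 1) ≠ 0 := by exact_mod_cast k.succ_ne_zero
    field_simp

lemma hasSubst_loc (ω : K) : HasSubst (loc ω) := by
  apply HasSubst.of_constantCoeff_zero'
  obtain ⟨f, hf, -⟩ := loc_eq ω
  simp [hf]

lemma subst_one {a : K⟦X⟧} (ha : HasSubst a) : (1 : K⟦X⟧).subst a = 1 := by
  rw [← coe_substAlgHom ha, map_one]

/-- Substituting `W` into the binomial series inverts the cube root of `1 - W`. -/
lemma bin_subst [CharZero K] (ω : K) :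
    (bin K).subst (loc (1 - ω)) * (lin (1 - ω) * (lin ω)⁻¹) = 1 := by
  have ha := hasSubst_loc (1 - ω)
  have h := congrArg (fun f : K⟦X⟧ => f.subst (loc (1 - ω))) (bin_cube (K := K))
  simp only [← coe_substAlgHom ha, map_mul, map_pow, map_sub, map_one, substAlgHom_X] at h
  rw [one_sub_loc, coe_substAlgHom, show 1 - (1 - ω) = ω by ring] at h
  have hc : constantCoeff ((bin K).subst (loc (1 - ω))) = 1 := by
    obtain ⟨f, hf, -⟩ := loc_eq (1 - ω)
    have : bin K = X * PowerSeries.mk (fun k => coeff (k + 1) (bin K)) + 1 := by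
      have := eq_X_mul_shift_add_const (bin K)
      simpa [bin, rise] using this
    have hf0 : constantCoeff (loc (1 - ω)) = 0 := by simp [hf]
    rw [this, ← coe_substAlgHom ha, map_add, map_mul, substAlgHom_X, map_one, map_add, map_mul, hf0]
    simp
  set r := (bin K).subst (loc (1 - ω)) * (lin (1 - ω) * (lin ω)⁻¹) with hr
  -- A cube root of `1` with constant coefficient `1` is `1`, since the series form a domain.
  have hr3 : (r - 1) * (r ^ 2 + r + 1) = 0 := by
    rw [hr]; linear_combination h
  have hrc : constantCoeff r = 1 := by simp [hr, hc, lin]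
  rcases mul_eq_zero.mp hr3 with h | h
  · exact sub_eq_zero.mp h
  · exfalso
    have := congrArg constantCoeff h
    simp [hrc] at this
    norm_num at this

/-- The first row of the factorization sums to the geometric series. -/
lemma first_row_series [CharZero K] {ω : K} (hω : ω ^ 2 - ω + 1 = 0) :
    v₀ ω * (wt K).subst (loc (1 - ω)) * (1 - X) = 1 := by
  have ha := hasSubst_loc (1 - ω)
  have h := congrArg (fun f : K⟦X⟧ => f.subst (loc (1 - ω))) (X_mul_wt (K := K))
  simp only [← coe_substAlgHom ha, map_mul, map_sub, map_one, map_ofNat, substAlgHom_X] at h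
  simp only [coe_substAlgHom] at h
  have hB := bin_subst ω
  have hp := lin_mul_inv ω
  have hW : loc (1 - ω) ≠ 0 := by
    intro h0
    obtain ⟨f, hf, hf'⟩ := loc_eq (1 - ω)
    rw [h0] at hf
    have : f = 0 := by
      rcases mul_eq_zero.mp hf.symm with h | h
      · exact absurd h X_ne_zero
      · exact h
    rw [this, map_zero] at hf'
    have h3 : (3 : K) ≠ 0 := by norm_num
    have : 2 * ω - 1 = 0 := by
      apply (mul_eq_zero.mp (?_ : (3 : K) * (2 * ω - 1) = 0)).resolve_left h3
      linear_combination hf'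
    apply h3
    linear_combination 4 * hω - (2 * ω - 1) * this
  apply mul_left_cancel₀ hW
  have e : lin ω ^ 2 + lin ω * lin (1 - ω) + lin (1 - ω) ^ 2 = 3 * (1 - X) := by
    have hw : (C ω : K⟦X⟧) ^ 2 - C ω + 1 = 0 := by
      rw [← map_pow, ← map_sub, ← map_one C, ← map_add, hω, map_zero]
    simp only [lin, map_sub, map_one]
    linear_combination X ^ 2 * hw
  have e2 : loc (1 - ω) = 1 - lin (1 - ω) ^ 3 * (lin ω)⁻¹ ^ 3 := by
    rw [loc, show 1 - (1 - ω) = ω by ring]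
  have e3 : loc (1 - ω) * (wt K).subst (loc (1 - ω)) * lin (1 - ω) * (lin ω)⁻¹
      = 3 * (1 - lin (1 - ω) * (lin ω)⁻¹) := by
    linear_combination lin (1 - ω) * (lin ω)⁻¹ * h + 3 * hB
  have hp3 : lin ω ^ 3 * (lin ω)⁻¹ ^ 3 = 1 := by rw [← mul_pow, hp, one_pow]
  have hp1 : lin ω * (lin ω)⁻¹ ^ 3 = (lin ω)⁻¹ ^ 2 := by linear_combination (lin ω)⁻¹ ^ 2 * hp
  rw [v₀]
  generalize (wt K).subst (loc (1 - ω)) = s at *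
  linear_combination (lin ω)⁻¹ ^ 2 * (1 - X) * e3
    - 3 * (1 - X) * hp1 + ((lin ω)⁻¹ ^ 3 * (lin (1 - ω) - lin ω)) * e + hp3 - e2

lemma first_row [CharZero K] {ω : K} (hω : ω ^ 2 - ω + 1 = 0) {N j : ℕ} (hj : j < N) :
    ∑ l ∈ range N, rise (4 / 3 : K) l / (l + 1) * V ω j l = 1 := by
  have ha := hasSubst_loc (1 - ω)
  have h1 : v₀ ω * (wt K).subst (loc (1 - ω)) = PowerSeries.mk 1 := by
    have h := first_row_series hω
    have h' := PowerSeries.mk_one_mul_one_sub_eq_one K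
    have h0 : (1 - X : K⟦X⟧) ≠ 0 := by
      intro h0; rw [h0, mul_zero] at h; exact zero_ne_one h
    exact mul_right_cancel₀ h0 (h.trans h'.symm)
  have h2 := congrArg (coeff j) h1
  obtain ⟨f, hf, -⟩ := loc_eq (1 - ω)
  obtain ⟨M, rfl⟩ : ∃ M, N = M + 1 := ⟨N - 1, by omega⟩
  rw [coeff_mk, Pi.one_apply] at h2
  refine Eq.trans ?_ h2
  -- Only the first `N` powers of `W` contribute to the coefficient of `y ^ j`, as `W = O(y)`.
  have h3 : (wt K).subst (loc (1 - ω)) = X ^ (M + 1) * (f ^ (M + 1) *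
      (PowerSeries.mk fun i => coeff (i + (M + 1)) (wt K)).subst (loc (1 - ω)))
      + ∑ l ∈ range (M + 1), C (coeff l (wt K)) * loc (1 - ω) ^ l := by
    conv_lhs => rw [eq_X_pow_mul_shift_add_trunc (M + 1) (wt K)]
    rw [← coe_substAlgHom ha, map_add, map_mul, map_pow, substAlgHom_X, substAlgHom_coe,
      Polynomial.aeval_eq_sum_range' (natDegree_trunc_lt (wt K) M)]
    congr 1
    · rw [← mul_assoc, ← mul_pow, ← hf]
    · refine sum_congr rfl fun l hl => ?_
      rw [coeff_trunc, if_pos (mem_range.mp hl), smul_eq_C_mul]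
  rw [h3, mul_add, map_add, ← mul_assoc, mul_comm (v₀ ω), mul_assoc, coeff_X_pow_mul',
    if_neg (by omega), zero_add, mul_sum, map_sum]
  refine sum_congr rfl fun l _ => ?_
  rw [V, ser, coeff_C_mul, mul_left_comm (v₀ ω), coeff_C_mul, wt, coeff_mk]
  rw [div_mul_eq_div_div, div_eq_mul_inv _ (l.factorial : K), mul_assoc]

end Series

/-! ### The factorization -/

section Factor

variable {K : Type*} [Field K]

/-- The middle factor, a Hilbert matrix up to row and column scaling. -/
def H (K : Type*) [Field K] (k l : ℕ) : K :=
  rise (2 / 3 : K) k * rise (4 / 3 : K) l / (k + l + 1)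

lemma H_rec [CharZero K] (k l : ℕ) : H K (k + 1) l + H K k (l + 1) = (k + l + 1) * H K k l := by
  have h1 : ((k : K) + l + 1) ≠ 0 := by exact_mod_cast (k + l).succ_ne_zero
  have h2 : ((k : K) + l + 2) ≠ 0 := by exact_mod_cast (k + l + 1).succ_ne_zero
  simp only [H, rise_succ]
  push_cast
  rw [show (k : K) + 1 + l + 1 = k + l + 2 by ring, show (k : K) + (l + 1) + 1 = k + l + 2 by ring]
  field_simp
  ring

/-- The truncated product of the three factors. -/
noncomputable def B (ω : K) (N i j : ℕ) : K :=
  ∑ k ∈ range N, ∑ l ∈ range N, U ω i k * V ω j l * H K k l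

lemma T_sum {ι : Type*} (s : Finset ι) (f : ι → ℕ → K) (i : ℕ) :
    T (fun x => ∑ k ∈ s, f k x) i = ∑ k ∈ s, T (f k) i := by
  cases i <;> simp [T, pd, mul_sum, sum_add_distrib, sum_sub_distrib, mul_add, mul_sub]

lemma T_mul (c : K) (f : ℕ → K) (i : ℕ) : T (fun x => f x * c) i = T f i * c := by
  cases i <;> simp [T, pd] <;> ring

lemma sum_pd (f g : ℕ → K) (M : ℕ) (hf : f M = 0) :
    ∑ k ∈ range (M + 1), pd f k * g k = ∑ k ∈ range (M + 1), f k * g (k + 1) := by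
  rw [sum_range_succ', sum_range_succ, hf]
  simp [pd]

/-- Summation by parts moves `T` from the outer factors to `H`, where both sides agree by
`H_rec`. -/
lemma T_B [CharZero K] {ω : K} (hω : ω ^ 2 - ω + 1 = 0) {M i j : ℕ} (hi : i < M) (hj : j < M) :
    T (fun x => B ω (M + 1) x j) i = T (fun y => B ω (M + 1) i y) j := by
  have hl : T (fun x => B ω (M + 1) x j) i = ∑ k ∈ range (M + 1), ∑ l ∈ range (M + 1),
      3 * (2 * ω - 1) * (U ω i k * V ω j l * (H K (k + 1) l - (k + 1 / 3) * H K k l)) := by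
    unfold B
    simp only [T_sum, mul_assoc, T_mul, T_U hω]
    refine sum_comm.trans (Eq.trans ?_ sum_comm)
    refine sum_congr rfl fun l _ => ?_
    have := sum_pd (U ω i) (fun k => H K k l) M (U_of_lt ω hi)
    have e1 : ∀ k, 3 * ((2 * ω - 1) * ((pd (U ω i) k - (k + 1 / 3) * U ω i k) *
        (V ω j l * H K k l))) = 3 * (2 * ω - 1) * V ω j l * (pd (U ω i) k * H K k l)
        - 3 * (2 * ω - 1) * V ω j l * ((k + 1 / 3) * U ω i k * H K k l) := fun k => by ring
    have e2 : ∀ k, 3 * ((2 * ω - 1) * (U ω i k * (V ω j l * (H K (k + 1) l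
        - (k + 1 / 3) * H K k l)))) = 3 * (2 * ω - 1) * V ω j l * (U ω i k * H K (k + 1) l)
        - 3 * (2 * ω - 1) * V ω j l * ((k + 1 / 3) * U ω i k * H K k l) := fun k => by ring
    simp only [e1, e2, sum_sub_distrib, ← mul_sum, this]
  have hr : T (fun y => B ω (M + 1) i y) j = ∑ k ∈ range (M + 1), ∑ l ∈ range (M + 1),
      3 * (2 * ω - 1) * (U ω i k * V ω j l * ((l + 2 / 3) * H K k l - H K k (l + 1))) := by
    unfold B
    simp only [mul_comm (U ω i _) (V ω _ _)]
    simp only [T_sum, mul_assoc, T_mul, T_V hω]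
    refine sum_congr rfl fun k _ => ?_
    have := sum_pd (V ω j) (fun l => H K k l) M (V_of_lt ω hj)
    have e1 : ∀ l : ℕ, 3 * ((2 * ω - 1) * (((l + 2 / 3) * V ω j l - pd (V ω j) l) *
        (U ω i k * H K k l))) = 3 * (2 * ω - 1) * U ω i k * ((l + 2 / 3) * V ω j l * H K k l)
        - 3 * (2 * ω - 1) * U ω i k * (pd (V ω j) l * H K k l) := fun l => by ring
    have e2 : ∀ l : ℕ, 3 * ((2 * ω - 1) * (V ω j l * (U ω i k * ((l + 2 / 3) * H K k l
        - H K k (l + 1))))) = 3 * (2 * ω - 1) * U ω i k * ((l + 2 / 3) * V ω j l * H K k l)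
        - 3 * (2 * ω - 1) * U ω i k * (V ω j l * H K k (l + 1)) := fun l => by ring
    simp only [e1, e2, sum_sub_distrib, ← mul_sum, this]
  rw [hl, hr]
  refine sum_congr rfl fun k _ => sum_congr rfl fun l _ => ?_
  linear_combination 3 * (2 * ω - 1) * U ω i k * V ω j l * H_rec (K := K) k l

/-- An array on which the two copies of `T` agree is determined by its first row. -/
lemma eq_of_T [CharZero K] {f g : ℕ → ℕ → K} {M : ℕ}
    (hf : ∀ i j, i + j < M → T (fun x => f x j) i = T (fun y => f i y) j)
    (hg : ∀ i j, i + j < M → T (fun x => g x j) i = T (fun y => g i y) j)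
    (h0 : ∀ j, j ≤ M → f 0 j = g 0 j) (i : ℕ) : ∀ j, i + j ≤ M → f i j = g i j := by
  induction i using Nat.strong_induction_on with
  | _ i ih =>
    intro j hij
    rcases i with _ | i
    · exact h0 j (by omega)
    have hi : ((i : K) + 1) ≠ 0 := by exact_mod_cast i.succ_ne_zero
    have e1 : pd (fun x => f x j) i = pd (fun x => g x j) i := by
      rcases i with _ | i
      · rfl
      · exact ih i (by omega) j (by omega)
    have e2 : pd (fun y => f i y) j = pd (fun y => g i y) j := by
      rcases j with _ | j
      · rfl
      · exact ih i (by omega) j (by omega)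
    have h1 := hf i j (by omega)
    have h2 := hg i j (by omega)
    simp only [T] at h1 h2
    rw [e1, e2, ih i (by omega) j (by omega), ih i (by omega) (j + 1) (by omega)] at h1
    have := mul_left_cancel₀ hi (h1.trans h2.symm)
    linear_combination this

lemma T_cast [CharZero K] (f : ℕ → ℚ) (i : ℕ) : T (fun x => (f x : K)) i = ((T f i : ℚ) : K) := by
  cases i <;> simp [T, pd]

/-- The entries of the matrix identity `A = U H Vᵀ`. -/
lemma a_eq_B [CharZero K] {ω : K} (hω : ω ^ 2 - ω + 1 = 0) {M i j : ℕ} (h : i + j ≤ M) :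
    (a i j : K) = B ω (M + 1) i j := by
  refine eq_of_T (f := fun i j => (a i j : K)) (g := B ω (M + 1)) (M := M) ?_ ?_ ?_ i j h
  · intro i j _
    rw [T_cast (fun x => a x j), T_cast (fun y => a i y), T_a]
  · intro i j hij
    exact T_B hω (by omega) (by omega)
  · intro j hj
    simp only [a_zero_left, Rat.cast_one]
    rw [B, sum_range_succ', sum_eq_zero, zero_add, U_self]
    · rw [← first_row hω (Nat.lt_succ_of_le hj)]
      refine sum_congr rfl fun l _ => ?_
      simp [H, rise]; ring
    · intro k _
      simp [U_of_lt ω (Nat.succ_pos k)]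

lemma a_eq_sum [CharZero K] {ω : K} (hω : ω ^ 2 - ω + 1 = 0) {n i j : ℕ} (hi : i < n)
    (hj : j < n) :
    (a i j : K) = ∑ k ∈ range n, ∑ l ∈ range n, U ω i k * V ω j l * H K k l := by
  have hs : range n ⊆ range (2 * n + 1) := range_subset_range.mpr (by omega)
  rw [a_eq_B hω (show i + j ≤ 2 * n by omega), B]
  rw [← sum_subset hs]
  · refine sum_congr rfl fun k _ => ?_
    rw [← sum_subset hs]
    intro l _ hl
    rw [V_of_lt ω (by simp at hl; omega)]; simp
  · intro k _ hk
    refine sum_eq_zero fun l _ => ?_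
    rw [U_of_lt ω (by simp at hk; omega)]; simp

/-! ### The Hilbert matrix -/

/-- The integral of `x ^ k` against the `m`-th shifted Legendre polynomial over `[0, 1]`, that is
`k!² / ((k - m)! (k + m + 1)!)` for `m ≤ k` and `0` otherwise. -/
def ell (K : Type*) [Field K] (k : ℕ) : ℕ → K
  | 0 => 1 / (k + 1)
  | m + 1 => ell K k m * (k - m) / (k + m + 2)

lemma ell_of_lt {k m : ℕ} (h : k < m) : ell K k m = 0 := by
  induction m with
  | zero => omega
  | succ m ih =>
    rcases Nat.lt_succ_iff_lt_or_eq.mp h with h | h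
    · simp [ell, ih h]
    · simp [ell, h]

lemma ell_mul [CharZero K] (m d : ℕ) :
    ell K (m + d) m * (d.factorial * (2 * m + d + 1).factorial) = ((m + d).factorial : K) ^ 2 := by
  induction m generalizing d with
  | zero =>
    have h2 : ((d : K) + 1) ≠ 0 := by exact_mod_cast d.succ_ne_zero
    simp only [ell, zero_add, mul_zero, Nat.factorial_succ]
    push_cast
    field_simp
  | succ m ih =>
    have h := ih (d + 1)
    have h2 : ((m : K) + 1 + d + m + 2) ≠ 0 := by
      exact_mod_cast (m + 1 + d + m + 1).succ_ne_zero
    rw [show m + (d + 1) = m + 1 + d by omega] at h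
    rw [← h, ell, show 2 * (m + 1) + d + 1 = (2 * m + (d + 1) + 1) + 1 by omega,
      Nat.factorial_succ (2 * m + (d + 1) + 1), Nat.factorial_succ d]
    push_cast
    field_simp
    ring

/-- The summands telescope: their partial sums are governed by
`(k + m + 1) (l + m + 1) ell k m * ell l m`. -/
lemma hilbert_sum [CharZero K] (k l n : ℕ) :
    (k + l + 1) * ∑ m ∈ range n, ell K k m * ell K l m * (2 * m + 1)
      = 1 - (k + n + 1) * (l + n + 1) * (ell K k n * ell K l n) := by
  induction n with
  | zero =>
    have h1 : ((k : K) + 1) ≠ 0 := by exact_mod_cast k.succ_ne_zero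
    have h2 : ((l : K) + 1) ≠ 0 := by exact_mod_cast l.succ_ne_zero
    simp [ell]
    field_simp
    ring
  | succ n ih =>
    have h1 : ((k : K) + n + 2) ≠ 0 := by exact_mod_cast (k + n + 1).succ_ne_zero
    have h2 : ((l : K) + n + 2) ≠ 0 := by exact_mod_cast (l + n + 1).succ_ne_zero
    rw [sum_range_succ, mul_add, ih]
    simp only [ell]
    push_cast
    rw [show (k : K) + (n + 1) + 1 = k + n + 2 by ring, show (l : K) + (n + 1) + 1 = l + n + 2 by ring]
    field_simp
    ring

/-- The entries of the `L D Lᵀ` factorization of the scaled Hilbert matrix; the remainder in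
`hilbert_sum` vanishes since `ell k n = 0` for `k < n`. -/
lemma H_eq_sum [CharZero K] {k n : ℕ} (l : ℕ) (hk : k < n) :
    H K k l = ∑ m ∈ range n, (rise (2 / 3 : K) k * ell K k m) * (2 * m + 1) *
      (rise (4 / 3 : K) l * ell K l m) := by
  have h1 : ((k : K) + l + 1) ≠ 0 := by exact_mod_cast (k + l).succ_ne_zero
  have h := hilbert_sum (K := K) k l n
  rw [ell_of_lt hk] at h
  rw [H, div_eq_iff h1]
  have e : ∀ m : ℕ, (rise (2 / 3 : K) k * ell K k m) * (2 * m + 1) * (rise (4 / 3 : K) l * ell K l m)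
      = rise (2 / 3 : K) k * rise (4 / 3 : K) l * (ell K k m * ell K l m * (2 * m + 1)) :=
    fun m => by ring
  simp only [e, ← mul_sum]
  linear_combination (-rise (2 / 3 : K) k * rise (4 / 3 : K) l) * h

lemma rise_mul (k : ℕ) [CharZero K] :
    27 ^ k * (rise (2 / 3 : K) k * rise (4 / 3 : K) k) * k.factorial = (3 * k + 1).factorial := by
  induction k with
  | zero => simp [rise]
  | succ k ih =>
    rw [show 3 * (k + 1) + 1 = 3 * k + 3 + 1 by ring, Nat.factorial_succ (3 * k + 3),
      Nat.factorial_succ (3 * k + 2), Nat.factorial_succ (3 * k + 1)]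
    push_cast
    rw [← ih, rise_succ, rise_succ, Nat.factorial_succ]
    push_cast
    ring

/-! ### The determinant -/

lemma det_lower {n : ℕ} (f : ℕ → ℕ → K) (hf : ∀ i k, i < k → f i k = 0) :
    (Matrix.of fun i k : Fin n => f i k).det = ∏ k ∈ range n, f k k := by
  rw [Matrix.det_of_isLowerTriangular]
  · exact Fin.prod_univ_eq_prod_range (fun k => f k k) n
  · intro i k h
    exact hf _ _ h

lemma diag_term [CharZero K] {ω : K} (hω : ω ^ 2 - ω + 1 = 0) (k : ℕ) :
    U ω k k * (rise (2 / 3 : K) k * ell K k k) * (2 * k + 1) * (rise (4 / 3 : K) k * ell K k k) *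
      V ω k k = (3 * k + 1).factorial * k.factorial / ((2 * k).factorial * (2 * k + 1).factorial) := by
  have hk : (k.factorial : K) ≠ 0 := by exact_mod_cast k.factorial_ne_zero
  have h2 : ((2 * k).factorial : K) ≠ 0 := by exact_mod_cast (2 * k).factorial_ne_zero
  have h3 : (2 * (k : K) + 1) ≠ 0 := by exact_mod_cast (2 * k).succ_ne_zero
  have he : ell K k k = k.factorial ^ 2 / ((2 * k + 1) * (2 * k).factorial) := by
    have := ell_mul (K := K) k 0
    rw [add_zero, add_zero, Nat.factorial_zero, Nat.factorial_succ] at this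
    push_cast at this
    rw [eq_div_iff (mul_ne_zero h3 h2), ← this]
    ring
  have h27 : (3 * (2 * ω - 1)) ^ k * (3 * (1 - 2 * ω)) ^ k = (27 : K) ^ k := by
    rw [← mul_pow]; congr 1; linear_combination (-36) * hω
  rw [← rise_mul, ← h27, U_self, V_self, he, Nat.factorial_succ]
  push_cast
  field_simp

lemma det_a [CharZero K] {ω : K} (hω : ω ^ 2 - ω + 1 = 0) (n : ℕ) :
    (Matrix.of fun i j : Fin n => (a i j : K)).det = ∏ k ∈ range n,
      ((3 * k + 1).factorial * k.factorial / ((2 * k).factorial * (2 * k + 1).factorial) : K) := by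
  have hA : (Matrix.of fun i j : Fin n => (a i j : K))
      = (Matrix.of fun i k : Fin n => U ω i k)
        * ((Matrix.of fun k m : Fin n => rise (2 / 3 : K) k * ell K k m)
          * Matrix.diagonal (fun m : Fin n => (2 * (m : ℕ) + 1 : K))
          * (Matrix.of fun l m : Fin n => rise (4 / 3 : K) l * ell K l m).transpose)
        * (Matrix.of fun j l : Fin n => V ω j l).transpose := by
    have hH : (Matrix.of fun k m : Fin n => rise (2 / 3 : K) k * ell K k m)
          * Matrix.diagonal (fun m : Fin n => (2 * (m : ℕ) + 1 : K))
          * (Matrix.of fun l m : Fin n => rise (4 / 3 : K) l * ell K l m).transpose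
        = Matrix.of fun k l : Fin n => H K k l := by
      ext k l
      rw [Matrix.mul_apply, Matrix.of_apply, H_eq_sum (l : ℕ) k.2, ← Fin.sum_univ_eq_sum_range
        (fun m => (rise (2 / 3 : K) k * ell K k m) * (2 * m + 1) *
          (rise (4 / 3 : K) l * ell K l m))]
      simp [Matrix.mul_diagonal]
    rw [hH]
    ext i j
    rw [Matrix.of_apply, a_eq_sum hω i.2 j.2, sum_comm, Matrix.mul_apply,
      ← Fin.sum_univ_eq_sum_range
        (fun l => ∑ k ∈ range n, U ω i k * V ω j l * H K k l)]
    refine sum_congr rfl fun l _ => ?_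
    rw [Matrix.mul_apply, sum_mul, ← Fin.sum_univ_eq_sum_range
        (fun k => U ω i k * V ω j l * H K k l)]
    refine sum_congr rfl fun k _ => ?_
    simp only [Matrix.of_apply, Matrix.transpose_apply]
    ring
  rw [hA]
  simp only [Matrix.det_mul, Matrix.det_transpose, Matrix.det_diagonal]
  rw [det_lower (U ω) fun i k h => U_of_lt ω h, det_lower (V ω) fun i k h => V_of_lt ω h,
    det_lower (fun k m => rise (2 / 3 : K) k * ell K k m) fun i k h => by simp [ell_of_lt h],
    det_lower (fun k m => rise (4 / 3 : K) k * ell K k m) fun i k h => by simp [ell_of_lt h],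
    Fin.prod_univ_eq_prod_range (fun m => (2 * (m : K) + 1)) n, ← mul_assoc, ← mul_assoc,
    ← prod_mul_distrib, ← prod_mul_distrib, ← prod_mul_distrib, ← prod_mul_distrib]
  exact prod_congr rfl fun k _ => diag_term hω k

end Factor

/-- The quotient of consecutive Robbins numbers is `(3n+1)! n! / ((2n)! (2n+1)!)`. -/
lemma robbins_prod (n : ℕ) :
    ∏ k ∈ range n,
      ((3 * k + 1).factorial * k.factorial / ((2 * k).factorial * (2 * k + 1).factorial) : ℚ)
      = ∏ k ∈ range n, ((3 * k + 1).factorial : ℚ) / (n + k).factorial := by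
  induction n with
  | zero => simp
  | succ n ih =>
    rw [prod_range_succ, ih, prod_div_distrib, prod_div_distrib, prod_range_succ _ n,
      prod_range_succ _ n]
    have h := prod_range_succ' (fun k => ((n + k).factorial : ℚ)) n
    rw [prod_range_succ] at h
    have hne : ∀ c : ℕ, ∏ k ∈ range n, ((c + k).factorial : ℚ) ≠ 0 := fun c =>
      prod_ne_zero_iff.mpr fun k _ => by exact_mod_cast (c + k).factorial_ne_zero
    have h1 := hne n
    have h2 := hne (n + 1)
    have h3 : ((2 * n).factorial : ℚ) ≠ 0 := by exact_mod_cast (2 * n).factorial_ne_zero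
    have h4 : ((2 * n + 1).factorial : ℚ) ≠ 0 := by exact_mod_cast (2 * n + 1).factorial_ne_zero
    rw [show n + 1 + n = 2 * n + 1 by ring]
    have hp : ∏ k ∈ range n, ((n + (k + 1)).factorial : ℚ)
        = ∏ k ∈ range n, ((n + 1 + k).factorial : ℚ) :=
      prod_congr rfl fun k _ => by rw [show n + (k + 1) = n + 1 + k by ring]
    rw [← two_mul, add_zero, hp] at h
    rw [div_mul_div_comm, div_eq_div_iff (by positivity) (by positivity)]
    linear_combination (-(∏ k ∈ range n, ((3 * k + 1).factorial : ℚ)) *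
      (3 * n + 1).factorial * (2 * n + 1).factorial) * h

end RobbinsDet


/-- The determinant of the `(n+1) × (n+1)` symmetric matrix with `(i,j)` entry
`∑_{m=0}^{min(i,j)} C(i+j-2m, i-m)` (the coefficient matrix of `1/((1-xy)(1-x-y))`)
equals the Robbins number `A_{n+1} = ∏_{k=0}^{n} (3k+1)!/((n+1)+k)!`. -/
theorem robbins_det_symmetrized (n : ℕ) :
    Matrix.det (Matrix.of fun i j : Fin (n + 1) =>
      ∑ m ∈ Finset.range (min (i : ℕ) (j : ℕ) + 1),
        (Nat.choose ((i : ℕ) + (j : ℕ) - 2 * m) ((i : ℕ) - m) : ℚ)) =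
    ∏ k ∈ Finset.range (n + 1),
      (Nat.factorial (3 * k + 1) : ℚ) / (Nat.factorial ((n + 1) + k) : ℚ) := by
  -- `z` is a square root of `-3`, so that `(1 + z) / 2` is a primitive sixth root of unity.
  obtain ⟨z, hz⟩ := IsAlgClosed.exists_pow_nat_eq (-3 : ℂ) (n := 2) (by norm_num)
  have hω : ((1 + z) / 2) ^ 2 - (1 + z) / 2 + 1 = 0 := by linear_combination hz / 4
  rw [← RobbinsDet.robbins_prod]
  apply (Rat.castHom ℂ).injective
  rw [RingHom.map_det]
  refine Eq.trans ?_ ((RobbinsDet.det_a hω (n + 1)).trans ?_)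
  · congr 1
  · simp
end

section
/- For every natural number n, the determinant of the (n+1)×(n+1) symmetric matrix whose (i,k) entry (0 ≤ i,k ≤ n) is ∑_{j=d}^{max(i,k)} C(2j−d, j−d), where d = |i−k|, equals the Robbins number A_{n+1} = ∏_{k=0}^{n} (3k+1)!/((n+1)+k)!. -/
open Finset

/-!
Write `m(i,k)` for the `(i,k)` entry. Since `m(i+1,k+1) = m(i,k) + C(i+k+2, k+1)`, the bivariate
generating function of the infinite matrix is `F(x,y) = 1 / ((1 - xy)(1 - x - y))`.

Let `z` be a primitive sixth root of unity, so `z² - z + 1 = 0`, and put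
`u = (1 - (1-z)x) / (1 - zx)`, `w = (1 - zy) / (1 - (1-z)y)`. The two factors of the denominator of
`F` become `u - ωw` and `u - ω²w` up to units, `ω` a primitive cube root of unity; precisely
`u² + uw + w² = 3 (1 - xy)(1 - x - y) / ((1 - zx)² (1 - (1-z)y)²)`. Hence, in terms of
`U = u³ - 1` and `V = w³ - 1`, which are multiples of `x` and `y`,

`F = 3 (1 - zx)⁻² (1 - (1-z)y)⁻² · ((1+U)^(1/3) - (1+V)^(1/3)) / (U - V)`.

The divided difference of `(1+U)^(1/3)` has the Hankel coefficient matrix `C(1/3, a+b+1)`, and the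
passage from `(U, V)` to `(x, y)` multiplies it on both sides by triangular matrices. So
the determinant is an explicit factor times a Hankel determinant (`ent_eq`, `det_ent`). To avoid
infinite sums of bivariate series, the divided difference is truncated and compared with `F` up
to terms of high total degree (`entSeries_approx`).

The Hankel matrix is brought to upper triangular form by the coefficients of the corresponding
orthogonal polynomials of Jacobi type. Orthogonality says that finite differences of order `n` kill
polynomials of degree less than `n`, and the diagonal entries follow from the finite differences of `1/(x+t)`
(`orth_sum_of_lt`, `orth_sum_self`, `det_hankel`).
-/

namespace Robbins

open PowerSeries

/-! ### The cube root of `1 + X` and the change of variable -/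

/-- The binomial series `(1 + X) ^ (1/3)`. -/
noncomputable def cbrt : ℂ⟦X⟧ := binomialSeries ℂ (1 / 3 : ℚ)

lemma cbrt_cube : cbrt ^ 3 = 1 + X := by
  have h := binomialSeries_nat (R := ℚ) (A := ℂ) 1
  rw [pow_one] at h
  rw [← h, cbrt, pow_succ, pow_two, ← binomialSeries_add, ← binomialSeries_add]
  norm_num

lemma cbrt_coeff_zero : coeff 0 cbrt = 1 := by
  simp [cbrt]

lemma cbrt_coeff_succ (m : ℕ) :
    ((m : ℂ) + 1) * coeff (m + 1) cbrt = (1 / 3 - m) * coeff m cbrt := by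
  have h : ((m : ℚ) + 1) * Ring.choose (1 / 3 : ℚ) (m + 1)
      = (1 / 3 - m) * Ring.choose (1 / 3 : ℚ) m := by
    rw [Ring.choose_eq_smul, Ring.choose_eq_smul, descPochhammer_succ_right,
      Polynomial.smeval_mul, Nat.factorial_succ]
    have : ((m : ℚ) + 1) ≠ 0 := by positivity
    have h2 : ((m.factorial : ℕ) : ℚ) ≠ 0 := by positivity
    simp only [smul_eq_mul, Polynomial.smeval_sub, Polynomial.smeval_X, Polynomial.smeval_natCast]
    push_cast
    field_simp
    simp only [mul_one, nsmul_eq_mul]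
    ring
  simp only [cbrt, binomialSeries_coeff]
  have h3 := congrArg (fun q : ℚ => (q : ℂ)) h
  push_cast at h3
  simpa [Rat.smul_def] using h3

/-- The geometric series `1 / (1 - z X)`. -/
noncomputable def geo (z : ℂ) : ℂ⟦X⟧ := mk fun n => z ^ n

/-- The expansion at `0` of the Möbius map `(1 - (1 - z) X) / (1 - z X)`. -/
noncomputable def mob (z : ℂ) : ℂ⟦X⟧ := (1 - C (1 - z) * X) * geo z

/-- The local parameter `mob z ^ 3 - 1` at `0`. -/
noncomputable def loc (z : ℂ) : ℂ⟦X⟧ := mob z ^ 3 - 1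

lemma geo_mul (z : ℂ) : geo z * (1 - C z * X) = 1 := by
  ext n
  cases n with
  | zero => simp [geo, mul_sub]
  | succ n =>
    rw [mul_sub, ← mul_assoc, map_sub, coeff_succ_mul_X, coeff_mul_C]
    simp [geo, pow_succ, coeff_one]

lemma loc_eq {z : ℂ} (hz : z ^ 2 - z + 1 = 0) :
    loc z = X * (C (3 * (2 * z - 1)) * (1 - X) * geo z ^ 3) := by
  have h := geo_mul z
  have hZ : (C z : ℂ⟦X⟧) ^ 2 - C z + 1 = 0 := by
    rw [← map_pow, ← map_sub, ← map_one C, ← map_add, hz, map_zero]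
  have h3 : geo z ^ 3 * (1 - C z * X) ^ 3 = 1 := by rw [← mul_pow, h, one_pow]
  have e : (C (3 * (2 * z - 1)) : ℂ⟦X⟧) = 3 * (2 * C z - 1) := by
    simp only [map_mul, map_sub, map_one, map_ofNat]
  have e1 : (C (1 - z) : ℂ⟦X⟧) = 1 - C z := by simp
  rw [loc, mob, e, e1, mul_pow]
  linear_combination h3 + geo z ^ 3 * (X^3 * (2 * C z - 1)) * hZ

lemma coeff_zero_geo (z : ℂ) : constantCoeff (geo z) = 1 := by
  rw [← coeff_zero_eq_constantCoeff_apply]; simp [geo]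

lemma coeff_zero_mob (z : ℂ) : constantCoeff (mob z) = 1 := by
  simp [mob, coeff_zero_geo]

/-- The entries of the triangular change-of-variable matrix: the coefficient of `X ^ i` in
`(1 - z X)⁻² (loc z) ^ a`. -/
noncomputable def row (z : ℂ) (i a : ℕ) : ℂ := coeff i (geo z ^ 2 * loc z ^ a)

lemma row_eq_zero {z : ℂ} (hz : z ^ 2 - z + 1 = 0) {i a : ℕ} (h : i < a) : row z i a = 0 := by
  rw [row, loc_eq hz, mul_pow, mul_left_comm, coeff_X_pow_mul', if_neg (by omega)]

lemma row_diag {z : ℂ} (hz : z ^ 2 - z + 1 = 0) (i : ℕ) :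
    row z i i = (3 * (2 * z - 1)) ^ i := by
  rw [row, loc_eq hz, mul_pow, mul_left_comm, coeff_X_pow_mul', if_pos le_rfl]
  simp [coeff_zero_geo]

/-- The truncation of `(1 + X) ^ (1/3)` to degree less than `N`, evaluated at `U`. -/
noncomputable def cbrtTrunc (N : ℕ) (U : ℂ⟦X⟧) : ℂ⟦X⟧ :=
  ∑ m ∈ range N, C (coeff m cbrt) * U ^ m

/-- Both `mob z` and `(1 + loc z) ^ (1/3)` are cube roots of `1 + loc z` with constant coefficient
`1`, so they agree; here this is stated modulo `X ^ N` for the truncated binomial series. -/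
lemma cbrtTrunc_loc {z : ℂ} (hz : z ^ 2 - z + 1 = 0) (N : ℕ) :
    ∃ r, cbrtTrunc N (loc z) = mob z + X ^ N * r := by
  have key : (Polynomial.X : Polynomial ℂ) ^ N ∣ (trunc N cbrt) ^ 3 - (1 + Polynomial.X) := by
    rw [Polynomial.X_pow_dvd_iff]
    intro d hd
    have h1 : (X : ℂ⟦X⟧) ^ N ∣
        (((trunc N cbrt) ^ 3 - (1 + Polynomial.X) : Polynomial ℂ) : ℂ⟦X⟧) := by
      have h2 := eq_X_pow_mul_shift_add_trunc N cbrt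
      have h3 : ((trunc N cbrt : Polynomial ℂ) : ℂ⟦X⟧) =
        cbrt - X ^ N * (PowerSeries.mk fun i ↦ coeff (i + N) cbrt) := by
        linear_combination -h2
      push_cast
      rw [h3, ← cbrt_cube]
      generalize (PowerSeries.mk fun i ↦ coeff (i + N) cbrt) = s
      exact ⟨-3 * cbrt ^ 2 * s + 3 * cbrt * s ^ 2 * X ^ N - s ^ 3 * X ^ N * X ^ N, by ring⟩
    rw [X_pow_dvd_iff] at h1
    rw [← Polynomial.coeff_coe]
    exact h1 d hd
  obtain ⟨q, hq⟩ := key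
  have hP : cbrtTrunc N (loc z) = (trunc N cbrt).eval₂ C (loc z) := by
    rw [eval₂_trunc_eq_sum_range, cbrtTrunc]
  have h4 := congrArg (Polynomial.eval₂ C (loc z)) hq
  rw [Polynomial.eval₂_sub, Polynomial.eval₂_pow, ← hP, Polynomial.eval₂_add,
    Polynomial.eval₂_one, Polynomial.eval₂_X, Polynomial.eval₂_mul, Polynomial.eval₂_pow,
    Polynomial.eval₂_X] at h4
  set P := cbrtTrunc N (loc z) with hPdef
  have hloc : loc z = mob z ^ 3 - 1 := rfl
  have hdvd : (X : ℂ⟦X⟧) ^ N ∣ (P - mob z) * (P ^ 2 + P * mob z + mob z ^ 2) := by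
    have e : (P - mob z) * (P ^ 2 + P * mob z + mob z ^ 2) = P ^ 3 - (1 + loc z) := by
      rw [hloc]; ring
    rw [e, h4, loc_eq hz, mul_pow, mul_assoc]
    exact dvd_mul_right _ _
  rcases Nat.eq_zero_or_pos N with rfl | hN
  · exact ⟨P - mob z, by simp⟩
  have hc : constantCoeff P = 1 := by
    have hl : constantCoeff (loc z) = 0 := by simp [loc, coeff_zero_mob]
    rw [hPdef, cbrtTrunc, map_sum, sum_eq_single_of_mem 0 (by simpa using hN)]
    · simpa using cbrt_coeff_zero
    · intro b _ hb
      simp [hl, hb]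
  have hu : IsUnit (P ^ 2 + P * mob z + mob z ^ 2) := by
    rw [isUnit_iff_constantCoeff]
    simp only [map_add, map_mul, map_pow, hc, coeff_zero_mob]
    norm_num
  rw [IsUnit.dvd_mul_right hu] at hdvd
  obtain ⟨r, hr⟩ := hdvd
  exact ⟨r, by rw [← hr]; ring⟩

/-! ### Bivariate generating functions -/

/-- Bivariate series are series in `y` (the outer variable `X`) over series in `x`; this embeds the
series in `x`. -/
noncomputable abbrev ix : ℂ⟦X⟧ →+* ℂ⟦X⟧⟦X⟧ := C

/-- The embedding of the series in `y` into the bivariate series. -/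
noncomputable abbrev iy : ℂ⟦X⟧ →+* ℂ⟦X⟧⟦X⟧ := PowerSeries.map C

/-- All coefficients of total degree less than `N` vanish. -/
def Low (N : ℕ) (E : ℂ⟦X⟧⟦X⟧) : Prop := ∀ i k, i + k < N → coeff i (coeff k E) = 0

lemma Low.mul {N : ℕ} {E : ℂ⟦X⟧⟦X⟧} (h : Low N E) (F : ℂ⟦X⟧⟦X⟧) : Low N (F * E) := by
  intro i k hik
  rw [coeff_mul, map_sum]
  refine sum_eq_zero fun p hp => ?_
  rw [coeff_mul]
  refine sum_eq_zero fun q hq => ?_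
  rw [HasAntidiagonal.mem_antidiagonal] at hp hq
  rw [h q.2 p.2 (by omega), mul_zero]

lemma coeff_ix_mul_iy (a b : ℂ⟦X⟧) (i k : ℕ) :
    coeff i (coeff k (ix a * iy b)) = coeff i a * coeff k b := by
  simp

/-- Cancelling `x + y - xy` from a series with no monomial in the box `[0, N]²` leaves a series with
no monomial of total degree less than `N`. -/
lemma low_of_mul {N : ℕ} {E : ℂ⟦X⟧⟦X⟧} {r s : ℂ⟦X⟧}
    (h : (ix X + X - ix X * X) * E = ix (X ^ (N + 1) * r) + iy (X ^ (N + 1) * s)) :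
    Low N E := by
  have hc : ∀ i k, i ≤ N → k ≤ N →
      coeff i (coeff k ((ix X + X - ix X * X) * E)) = 0 := by
    intro i k hi hk
    rw [h, map_add, map_add, coeff_C, coeff_map, coeff_X_pow_mul',
      if_neg (show ¬ N + 1 ≤ k by omega), map_zero, map_zero, add_zero]
    split_ifs
    · rw [coeff_X_pow_mul', if_neg (by omega)]
    · simp
  have e : (ix X + X - ix X * X) * E = E * ix X + E * X - E * ix X * X := by ring
  rw [e] at hc
  intro i k
  induction k generalizing i with
  | zero =>
    intro hik
    have := hc (i + 1) 0 (by omega) (by omega)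
    simpa [coeff_zero_mul_X, coeff_succ_mul_X] using this
  | succ k ih =>
    intro hik
    have := hc (i + 1) (k + 1) (by omega) (by omega)
    rw [map_sub, map_add, coeff_succ_mul_X, coeff_succ_mul_X, coeff_mul_C, coeff_mul_C, map_sub,
      map_add, coeff_succ_mul_X, coeff_succ_mul_X, ih (i + 1) (by omega), ih i (by omega)] at this
    simpa using this


/-- The entries of the matrix, with `max i k - min i k` for `|i - k|`. -/
def ent (i k : ℕ) : ℚ :=
  ∑ j ∈ Icc (max i k - min i k) (max i k),
    (Nat.choose (2 * j - (max i k - min i k)) (j - (max i k - min i k)) : ℚ)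

lemma ent_zero_left (k : ℕ) : ent 0 k = 1 := by
  simp [ent]

lemma ent_zero_right (i : ℕ) : ent i 0 = 1 := by
  simp [ent]

lemma ent_succ (i k : ℕ) :
    ent (i + 1) (k + 1) = ent i k + (Nat.choose (i + k + 2) (k + 1) : ℚ) := by
  have h1 : max (i + 1) (k + 1) = max i k + 1 := by omega
  have h2 : min (i + 1) (k + 1) = min i k + 1 := by omega
  rw [ent, h1, h2, Nat.add_sub_add_right,
    ← insert_Icc_right_eq_Icc_add_one (by omega), sum_insert (by simp), add_comm, ent]
  congr 2
  rcases le_total i k with h | h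
  · rw [max_eq_right h, min_eq_left h, show i + k + 2 = (i + 1) + (k + 1) by ring,
      ← Nat.choose_symm_add]
    congr 1 <;> omega
  · rw [max_eq_left h, min_eq_right h]
    congr 1 <;> omega

/-- The generating function of `ent`. -/
noncomputable def entSeries : ℂ⟦X⟧⟦X⟧ :=
  PowerSeries.mk fun k => PowerSeries.mk fun i => (ent i k : ℂ)

/-- The generating function of the symmetric Pascal matrix `C(i + k, k)`. -/
noncomputable def pascalSeries : ℂ⟦X⟧⟦X⟧ :=
  PowerSeries.mk fun k => PowerSeries.mk fun i => (Nat.choose (i + k) k : ℂ)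

lemma entSeries_mul : entSeries * (1 - ix X * X) = pascalSeries := by
  ext k i
  rw [mul_sub, ← mul_assoc, mul_one, map_sub, map_sub]
  cases k with
  | zero => simp [coeff_zero_mul_X, entSeries, pascalSeries, ent_zero_right]
  | succ k =>
    rw [coeff_succ_mul_X, coeff_mul_C]
    cases i with
    | zero => simp [coeff_zero_mul_X, entSeries, pascalSeries, ent_zero_left]
    | succ i =>
      rw [coeff_succ_mul_X]
      simp only [entSeries, pascalSeries, coeff_mk, ent_succ]
      push_cast
      rw [show i + 1 + (k + 1) = i + k + 2 by ring]
      ring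

lemma pascalSeries_mul : pascalSeries * (1 - ix X - X) = 1 := by
  ext k i
  rw [mul_sub, mul_sub, mul_one, map_sub, map_sub, map_sub, map_sub, coeff_mul_C]
  cases k with
  | zero =>
    cases i with
    | zero => simp [coeff_zero_mul_X, pascalSeries]
    | succ i => simp [coeff_zero_mul_X, coeff_succ_mul_X, pascalSeries, coeff_one]
  | succ k =>
    rw [coeff_succ_mul_X]
    cases i with
    | zero => simp [coeff_zero_mul_X, pascalSeries, coeff_one]
    | succ i =>
      rw [coeff_succ_mul_X]
      simp only [pascalSeries, coeff_mk, coeff_one]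
      rw [if_neg (by omega), map_zero, show i + 1 + (k + 1) = (i + k + 1) + 1 by ring,
        Nat.choose_succ_succ, show i + (k + 1) = i + k + 1 by ring,
        show i + 1 + k = i + k + 1 by ring]
      push_cast
      ring

/-- The part of total degree less than `N` in `(U, V)` of the divided difference
`((1 + U) ^ (1/3) - (1 + V) ^ (1/3)) / (U - V)`, at `U = loc z` in `x` and `V = loc (1 - z)` in
`y`. -/
noncomputable def kernelTrunc (z : ℂ) (N : ℕ) : ℂ⟦X⟧⟦X⟧ :=
  ∑ m ∈ range N, C (C (coeff (m + 1) cbrt)) *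
    ∑ a ∈ range (m + 1), ix (loc z) ^ a * iy (loc (1 - z)) ^ (m - a)

/-- The truncation by total degree keeps the telescoping of the divided difference exact. -/
lemma mul_kernelTrunc (z : ℂ) (N : ℕ) :
    (ix (loc z) - iy (loc (1 - z))) * kernelTrunc z N =
      ix (cbrtTrunc (N + 1) (loc z)) - iy (cbrtTrunc (N + 1) (loc (1 - z))) := by
  have h : ∀ U V : ℂ⟦X⟧⟦X⟧, ∀ m, (U - V) * ∑ a ∈ range (m + 1), U ^ a * V ^ (m - a)
      = U ^ (m + 1) - V ^ (m + 1) := by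
    intro U V m
    have := geom_sum₂_mul U V (m + 1)
    rw [mul_comm]
    simpa using this
  rw [kernelTrunc, mul_sum]
  simp_rw [mul_left_comm _ (C (C _)), h]
  rw [cbrtTrunc, cbrtTrunc, sum_range_succ', sum_range_succ']
  simp only [map_add, map_sum, map_mul, map_pow, map_C, pow_zero, map_one]
  rw [add_sub_add_right_eq_sub, ← sum_sub_distrib]
  exact sum_congr rfl fun m _ => by ring

/-- The change of variable turns the divided difference of `(1 + U) ^ (1/3)` into the generating
function of the matrix, up to terms of total degree at least `N`. -/
lemma entSeries_approx {z : ℂ} (hz : z ^ 2 - z + 1 = 0) (N : ℕ) :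
    Low N (3 * ix (geo z) ^ 2 * iy (geo (1 - z)) ^ 2 * kernelTrunc z N - entSeries) := by
  have hz' : (1 - z) ^ 2 - (1 - z) + 1 = 0 := by linear_combination hz
  obtain ⟨r, hr⟩ := cbrtTrunc_loc hz (N + 1)
  obtain ⟨s, hs⟩ := cbrtTrunc_loc hz' (N + 1)
  have hG := mul_kernelTrunc z N
  rw [hr, hs] at hG
  have hF : entSeries * (1 - ix X * X) * (1 - ix X - X) = 1 := by
    rw [entSeries_mul, pascalSeries_mul]
  set Z : ℂ⟦X⟧⟦X⟧ := C (C z) with hZdef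
  have hZ : Z ^ 2 - Z + 1 = 0 := by
    rw [hZdef, ← map_pow, ← map_pow, ← map_sub, ← map_sub, ← map_one C, ← map_one C, ← map_add,
      ← map_add, hz, map_zero, map_zero]
  have hgx : ix (geo z) * (1 - Z * ix X) = 1 := by
    rw [hZdef, ← map_mul, ← map_one ix, ← map_sub, ← map_mul, geo_mul]
  have hgy : iy (geo (1 - z)) * (1 - (1 - Z) * X) = 1 := by
    have := congrArg iy (geo_mul (1 - z))
    simpa using this
  have hux : ix (mob z) = (1 - (1 - Z) * ix X) * ix (geo z) := by
    simp [mob, hZdef]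
  have hwy : iy (mob (1 - z)) = (1 - Z * X) * iy (geo (1 - z)) := by
    simp [mob, hZdef]
  have hlx : ix (loc z) = ix (mob z) ^ 3 - 1 := by simp [loc]
  have hly : iy (loc (1 - z)) = iy (mob (1 - z)) ^ 3 - 1 := by simp [loc]
  set G := kernelTrunc z N
  rw [hlx, hly, map_add, map_add] at hG
  generalize hx : ix (X : ℂ⟦X⟧) = x at *
  generalize hy : (X : ℂ⟦X⟧⟦X⟧) = y at *
  generalize ix (geo z) = p at *
  generalize iy (geo (1 - z)) = q at *
  generalize ix (mob z) = u at *
  generalize iy (mob (1 - z)) = w at *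
  -- both Möbius images over the common denominator
  have hu2 : u = (1 - (1 - Z) * x) * (1 - (1 - Z) * y) * (p * q) := by
    rw [hux]; linear_combination (-(1 - (1 - Z) * x) * p) * hgy
  have hw2 : w = (1 - Z * x) * (1 - Z * y) * (p * q) := by
    rw [hwy]; linear_combination (-(1 - Z * y) * q) * hgx
  have hdiff : u - w = (2 * Z - 1) * (x + y - x * y) * (p * q) := by
    rw [hu2, hw2]; ring
  have hQ : u ^ 2 + u * w + w ^ 2 = 3 * (1 - x * y) * (1 - x - y) * (p * q) ^ 2 := by
    rw [hu2, hw2]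
    linear_combination (p * q) ^ 2 * (4 * (2 - x - y - x * y) * x * y
      + 3 * (Z ^ 2 - Z + 1) * x ^ 2 * y ^ 2 + x ^ 2 * (1 - y + y ^ 2)
      + y ^ 2 * (1 - x + x ^ 2)) * hZ
  have hE : Low N ((2 * Z - 1) * (p * q) * ((u ^ 2 + u * w + w ^ 2) * G - 1)) := by
    apply low_of_mul (r := r) (s := -s)
    rw [hx, hy, mul_neg, map_neg]
    linear_combination hG - ((u ^ 2 + u * w + w ^ 2) * G - 1) * hdiff
  obtain ⟨t, ht⟩ : ∃ t : ℂ⟦X⟧⟦X⟧, 3 * t = 1 :=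
    ⟨C (C (1 / 3)), by rw [← map_ofNat C 3, ← map_ofNat C 3, ← map_mul, ← map_mul]; simp⟩
  have hpq : p * q * ((1 - Z * x) * (1 - (1 - Z) * y)) = 1 := by
    linear_combination q * (1 - (1 - Z) * y) * hgx + hgy
  -- `(2Z-1)⁻¹ = -(2Z-1)/3`, because `(2Z-1)² = -3`
  have hinv : (-t * (2 * Z - 1) * ((1 - Z * x) * (1 - (1 - Z) * y))) * ((2 * Z - 1) * (p * q))
      = 1 := by
    linear_combination (-t * (2 * Z - 1) ^ 2) * hpq - 4 * t * hZ + ht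
  have hfin := hE.mul (entSeries * (-t * (2 * Z - 1) * ((1 - Z * x) * (1 - (1 - Z) * y))))
  convert hfin using 1
  have e : entSeries * (u ^ 2 + u * w + w ^ 2) = 3 * p ^ 2 * q ^ 2 := by
    rw [hQ]; linear_combination 3 * (p * q) ^ 2 * hF
  linear_combination (-entSeries * ((u ^ 2 + u * w + w ^ 2) * G - 1)) * hinv - G * e

/-- The matrix is a triangular matrix times a Hankel matrix times a triangular matrix. -/
lemma ent_eq {z : ℂ} (hz : z ^ 2 - z + 1 = 0) {n i k : ℕ} (hi : i ≤ n) (hk : k ≤ n) :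
    (ent i k : ℂ) = ∑ a ∈ range (n + 1), ∑ b ∈ range (n + 1),
      3 * row z i a * coeff (a + b + 1) cbrt * row (1 - z) k b := by
  have hz' : (1 - z) ^ 2 - (1 - z) + 1 = 0 := by linear_combination hz
  have h := entSeries_approx hz (2 * n + 1) i k (by omega)
  rw [map_sub, map_sub, sub_eq_zero] at h
  have e1 : coeff i (coeff k entSeries) = (ent i k : ℂ) := by simp [entSeries]
  rw [e1] at h
  rw [← h]
  have e2 : 3 * ix (geo z) ^ 2 * iy (geo (1 - z)) ^ 2 * kernelTrunc z (2 * n + 1) =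
      ∑ m ∈ range (2 * n + 1), ∑ a ∈ range (m + 1),
        ix (C (3 * coeff (a + (m - a) + 1) cbrt) * (geo z ^ 2 * loc z ^ a)) *
          iy (geo (1 - z) ^ 2 * loc (1 - z) ^ (m - a)) := by
    rw [kernelTrunc, mul_sum]
    refine sum_congr rfl fun m _ => ?_
    rw [mul_sum, mul_sum]
    refine sum_congr rfl fun a ha => ?_
    rw [mem_range] at ha
    rw [show a + (m - a) = m by omega]
    simp only [map_mul, map_pow, map_ofNat]
    ring
  rw [e2, sum_range_diag_flip (2 * n + 1) fun a b =>
    ix (C (3 * coeff (a + b + 1) cbrt) * (geo z ^ 2 * loc z ^ a)) *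
          iy (geo (1 - z) ^ 2 * loc (1 - z) ^ b)]
  have e3 : ∀ a b, coeff i (coeff k
      (ix (C (3 * coeff (a + b + 1) cbrt) * (geo z ^ 2 * loc z ^ a)) *
        iy (geo (1 - z) ^ 2 * loc (1 - z) ^ b))) =
      3 * row z i a * coeff (a + b + 1) cbrt * row (1 - z) k b := by
    intro a b
    rw [coeff_ix_mul_iy, coeff_C_mul, row, row]
    ring
  simp only [map_sum, e3]
  symm
  rw [← sum_subset (range_subset_range.2 (show n + 1 ≤ 2 * n + 1 by omega))]
  · refine sum_congr rfl fun a ha => ?_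
    rw [mem_range] at ha
    refine sum_subset (range_subset_range.2 (by omega)) fun b _ hb => ?_
    rw [mem_range] at hb
    rw [row_eq_zero hz' (by omega), mul_zero]
  · intro a _ ha
    rw [mem_range] at ha
    refine sum_eq_zero fun b _ => ?_
    rw [row_eq_zero hz (by omega)]
    ring

/-- The Hankel matrix with entries `C(1/3, a + b + 1)`. -/
noncomputable def hankel (n : ℕ) : Matrix (Fin n) (Fin n) ℂ :=
  Matrix.of fun a b => coeff ((a : ℕ) + b + 1) cbrt

lemma det_ent (n : ℕ) :
    ((Matrix.det (Matrix.of fun i k : Fin (n + 1) => ent i k) : ℚ) : ℂ) =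
      (∏ i ∈ range (n + 1), 3 * 27 ^ i) * (hankel (n + 1)).det := by
  obtain ⟨z, hz⟩ : ∃ z : ℂ, z ^ 2 - z + 1 = 0 := by
    obtain ⟨w, hw⟩ := IsAlgClosed.exists_pow_nat_eq (-3 : ℂ) two_pos
    exact ⟨(1 + w) / 2, by linear_combination hw / 4⟩
  have hz' : (1 - z) ^ 2 - (1 - z) + 1 = 0 := by linear_combination hz
  let A : Matrix (Fin (n + 1)) (Fin (n + 1)) ℂ := Matrix.of fun i a => 3 * row z i a
  let B : Matrix (Fin (n + 1)) (Fin (n + 1)) ℂ := Matrix.of fun i a => row (1 - z) i a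
  have hM : (Matrix.of fun i k : Fin (n + 1) => ent i k).map (Rat.castHom ℂ) =
      A * hankel (n + 1) * B.transpose := by
    ext i k
    simp only [Matrix.mul_apply, Matrix.map_apply, Matrix.of_apply, Matrix.transpose_apply, A, B,
      hankel, eq_ratCast]
    rw [ent_eq hz (Nat.lt_succ_iff.1 i.2) (Nat.lt_succ_iff.1 k.2), sum_comm, sum_range]
    refine sum_congr rfl fun b _ => ?_
    rw [sum_range, sum_mul]
  have hA : A.det = ∏ i ∈ range (n + 1), 3 * (3 * (2 * z - 1)) ^ i := by
    rw [Matrix.det_of_isLowerTriangular, prod_range]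
    · simp [A, row_diag hz]
    · intro i j hij
      have : (i : ℕ) < j := hij
      simp [A, row_eq_zero hz this]
  have hB : B.det = ∏ i ∈ range (n + 1), (3 * (2 * (1 - z) - 1)) ^ i := by
    rw [Matrix.det_of_isLowerTriangular, prod_range]
    · simp [B, row_diag hz']
    · intro i j hij
      have : (i : ℕ) < j := hij
      simp [B, row_eq_zero hz' this]
  have h := RingHom.map_det (Rat.castHom ℂ) (Matrix.of fun i k : Fin (n + 1) => ent i k)
  rw [eq_ratCast, RingHom.mapMatrix_apply, hM, Matrix.det_mul, Matrix.det_mul,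
    Matrix.det_transpose, hA, hB, mul_right_comm, ← prod_mul_distrib] at h
  rw [h]
  congr 1
  refine prod_congr rfl fun i _ => ?_
  rw [mul_assoc, ← mul_pow]
  congr 2
  -- `(2z - 1) (2(1 - z) - 1) = -(2z - 1)² = 3`
  linear_combination -36 * hz

/-! ### The Hankel determinant of the binomial coefficients `C(1/3, i + j + 1)` -/

/-- The rising factorial `x (x + 1) ⋯ (x + m - 1)`. -/
def poch (x : ℂ) (m : ℕ) : ℂ := ∏ i ∈ range m, (x + i)

lemma poch_add (x : ℂ) (i j : ℕ) : poch x (j + i) = poch x j * poch (x + j) i := by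
  rw [poch, prod_range_add, poch, poch]
  congr 1
  refine prod_congr rfl fun k _ => ?_
  push_cast; ring

lemma poch_two_thirds_ne_zero (m : ℕ) : poch (2 / 3) m ≠ 0 := by
  refine prod_ne_zero_iff.2 fun i _ => ?_
  have : (2 / 3 + i : ℂ) = ((2 / 3 + i : ℝ) : ℂ) := by push_cast; rfl
  rw [this, Complex.ofReal_ne_zero]
  positivity

lemma cbrt_coeff (m : ℕ) :
    coeff (m + 1) cbrt = 1 / 3 * (-1) ^ m * poch (2 / 3) m / (m + 1).factorial := by
  induction m with
  | zero =>
    have := cbrt_coeff_succ 0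
    rw [cbrt_coeff_zero] at this
    simpa [poch] using this
  | succ m ih =>
    have h := cbrt_coeff_succ (m + 1)
    rw [ih] at h
    have h1 : ((m + 1 : ℕ) + 1 : ℂ) ≠ 0 := by exact_mod_cast (Nat.succ_ne_zero (m + 1))
    have h2 : ((m + 1).factorial : ℂ) ≠ 0 := by exact_mod_cast Nat.factorial_ne_zero _
    rw [eq_div_iff (by exact_mod_cast Nat.factorial_ne_zero _), Nat.factorial_succ (m + 1),
      poch, prod_range_succ, ← poch]
    field_simp at h
    push_cast at h ⊢
    linear_combination h / 9

/-- The `n`-th finite difference kills polynomials of degree less than `n`. -/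
lemma alt_sum_poly {n : ℕ} {P : Polynomial ℂ} (hP : P.natDegree < n) :
    ∑ j ∈ range (n + 1), (-1 : ℂ) ^ j * n.choose j * P.eval (j : ℂ) = 0 := by
  have h := congrFun (Polynomial.fwdDiff_iter_eq_zero_of_degree_lt hP) 0
  rw [fwdDiff_iter_eq_sum_shift] at h
  have h2 := congrArg (fun t => (-1 : ℂ) ^ n * t) h
  simp only [Pi.zero_apply, mul_zero, mul_sum] at h2
  rw [← h2]
  refine sum_congr rfl fun j hj => ?_
  obtain ⟨d, rfl⟩ := Nat.exists_eq_add_of_le (Nat.lt_succ_iff.1 (mem_range.1 hj))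
  have : ((-1 : ℂ) ^ d) * (-1) ^ d = 1 := by rw [← mul_pow]; simp
  simp only [zsmul_eq_mul, Nat.add_sub_cancel_left]
  push_cast
  simp only [zero_add, nsmul_eq_mul, mul_one]
  rw [pow_add]
  linear_combination (-(-1 : ℂ) ^ j * ((j + d).choose j) * P.eval (j : ℂ)) * this

/-- The `n`-th finite difference of `t ↦ 1 / (x + t)` at `0`, up to sign. -/
lemma alt_sum_inv (n : ℕ) (x : ℕ) (hx : 0 < x) :
    ∑ j ∈ range (n + 1), (-1 : ℂ) ^ j * n.choose j / (x + j) = n.factorial / poch x (n + 1) := by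
  induction n generalizing x with
  | zero => simp [poch]
  | succ n ih =>
    have h1 := ih x hx
    have h2 := ih (x + 1) (by omega)
    have key : ∑ j ∈ range (n + 1 + 1), (-1 : ℂ) ^ j * (n + 1).choose j / (x + j) =
        ∑ j ∈ range (n + 1), (-1 : ℂ) ^ j * n.choose j / (x + j) -
        ∑ j ∈ range (n + 1), (-1 : ℂ) ^ j * n.choose j / ((x + 1 : ℕ) + j) := by
      rw [sum_range_succ']
      have : ∑ j ∈ range (n + 1), (-1 : ℂ) ^ j * n.choose j / (x + j) =
        ∑ j ∈ range (n + 1), (-1 : ℂ) ^ (j + 1) * n.choose (j + 1) / (x + (j + 1 : ℕ)) + 1 / x := by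
        have := sum_range_succ' (fun j => (-1 : ℂ) ^ j * n.choose j / (x + j)) (n + 1)
        rw [sum_range_succ] at this
        simpa using this
      rw [this, add_sub_right_comm, ← sum_sub_distrib]
      congr 1
      · refine sum_congr rfl fun j _ => ?_
        rw [Nat.choose_succ_succ]
        push_cast
        rw [show (x : ℂ) + 1 + j = x + (j + 1) by ring]
        ring
      · simp
    rw [key, h1, h2]
    have p1 : poch x (n + 1 + 1) = poch x (n + 1) * (x + n + 1) := by
      rw [poch, prod_range_succ, ← poch]; push_cast; ring
    have p2 : poch x (n + 1 + 1) = x * poch (x + 1 : ℕ) (n + 1) := by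
      rw [add_comm, poch_add]; simp [poch]
    have hne : ∀ m y : ℕ, 0 < y → poch y m ≠ 0 := by
      intro m y hy
      refine prod_ne_zero_iff.2 fun i _ => ?_
      exact_mod_cast (show y + i ≠ 0 by omega)
    have hxn : (x + n + 1 : ℂ) ≠ 0 := by exact_mod_cast (show x + n + 1 ≠ 0 by omega)
    have hx0 : (x : ℂ) ≠ 0 := by exact_mod_cast hx.ne'
    have e1 : (n.factorial : ℂ) / poch x (n + 1) =
        n.factorial * (x + n + 1) / poch x (n + 1 + 1) := by
      rw [p1, mul_div_mul_right _ _ hxn]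
    have e2 : (n.factorial : ℂ) / poch (x + 1 : ℕ) (n + 1) =
        n.factorial * x / poch x (n + 1 + 1) := by
      rw [p2, mul_comm (x : ℂ), mul_div_mul_right _ _ hx0]
    rw [e1, e2, ← sub_div, Nat.factorial_succ]
    congr 1
    push_cast
    ring

/-- The polynomial `(a + t)(a + t + 1) ⋯ (a + t + m - 1)` in `t`. -/
noncomputable def pochPoly (a : ℂ) (m : ℕ) : Polynomial ℂ :=
  ∏ i ∈ range m, (Polynomial.X + Polynomial.C (a + i))

lemma pochPoly_monic (a : ℂ) (m : ℕ) : (pochPoly a m).Monic :=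
  Polynomial.monic_prod_of_monic _ _ fun _ _ => Polynomial.monic_X_add_C _

lemma pochPoly_natDegree (a : ℂ) (m : ℕ) : (pochPoly a m).natDegree = m := by
  rw [pochPoly, Polynomial.natDegree_prod_of_monic _ _ fun _ _ => Polynomial.monic_X_add_C _]
  simp only [Polynomial.natDegree_X_add_C, sum_const, card_range, smul_eq_mul, mul_one]

lemma pochPoly_eval (a x : ℂ) (m : ℕ) : (pochPoly a m).eval x = poch (a + x) m := by
  rw [pochPoly, Polynomial.eval_prod, poch]
  refine prod_congr rfl fun i _ => ?_
  simp; ring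

lemma poch_natCast (x m : ℕ) : poch (x + 1 : ℕ) m * x.factorial = (x + m).factorial := by
  induction m with
  | zero => simp [poch]
  | succ m ih =>
    rw [poch, prod_range_succ, ← poch, ← add_assoc, Nat.factorial_succ]
    push_cast at ih ⊢
    linear_combination (x + 1 + m : ℂ) * ih

/-- Coefficients (not normalized to be monic) of the polynomials `∑ j, orth n j * t ^ j` that are
orthogonal for the linear functional with moments `t ^ m ↦ C(1/3, m + 1)`. -/
noncomputable def orth (n j : ℕ) : ℂ := n.choose j * (n + j).factorial / poch (2 / 3) j

lemma orth_mul (n i j : ℕ) : orth n j * coeff (j + i + 1) cbrt =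
    1 / 3 * (-1) ^ i * ((-1) ^ j * n.choose j *
      (poch (2 / 3 + j) i * ((n + j).factorial / (j + i + 1).factorial))) := by
  rw [orth, cbrt_coeff, poch_add, pow_add]
  have := poch_two_thirds_ne_zero j
  field_simp

/-- Orthogonality: after clearing factors, the sum is the `n`-th finite difference of a polynomial
of degree `n - 1`. -/
lemma orth_sum_of_lt {n i : ℕ} (h : i < n) :
    ∑ j ∈ range (n + 1), orth n j * coeff (j + i + 1) cbrt = 0 := by
  simp_rw [orth_mul]
  rw [← mul_sum]
  have hd : (pochPoly (2 / 3) i * pochPoly (i + 2 : ℕ) (n - 1 - i)).natDegree < n := by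
    rw [(pochPoly_monic _ _).natDegree_mul (pochPoly_monic _ _), pochPoly_natDegree,
      pochPoly_natDegree]
    omega
  rw [← mul_zero (1 / 3 * (-1 : ℂ) ^ i), ← alt_sum_poly hd]
  congr 1
  refine sum_congr rfl fun j _ => ?_
  rw [Polynomial.eval_mul, pochPoly_eval, pochPoly_eval]
  congr 2
  have := poch_natCast (j + i + 1) (n - 1 - i)
  rw [show j + i + 1 + (n - 1 - i) = n + j by omega] at this
  rw [← this, mul_div_assoc, div_self (by exact_mod_cast Nat.factorial_ne_zero _), mul_one]
  congr 1
  push_cast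
  ring

/-- The pairing of the `n`-th polynomial with `t ^ n`. The summand is now a polynomial of degree `n` divided by a linear factor; the
polynomial quotient has degree `n - 1` and drops out, so only the remainder contributes. -/
lemma orth_sum_self (n : ℕ) :
    ∑ j ∈ range (n + 1), orth n j * coeff (j + n + 1) cbrt =
      1 / 3 * poch (4 / 3) n * (n.factorial * n.factorial) / (2 * n + 1).factorial := by
  simp_rw [orth_mul]
  rw [← mul_sum]
  -- division with remainder of `(2/3 + t)_n` by `t + n + 1`
  obtain ⟨Q, hQ⟩ : ∃ Q, pochPoly (2 / 3) n =
      (Polynomial.X - Polynomial.C (-(n + 1 : ℂ))) * Q +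
        Polynomial.C ((pochPoly (2 / 3) n).eval (-(n + 1 : ℂ))) := by
    refine ⟨pochPoly (2 / 3) n /ₘ (Polynomial.X - Polynomial.C (-(n + 1 : ℂ))), ?_⟩
    rw [← Polynomial.modByMonic_X_sub_C_eq_C_eval, add_comm]
    exact (Polynomial.modByMonic_add_div _ _).symm
  have hr : (pochPoly (2 / 3) n).eval (-(n + 1 : ℂ)) = (-1) ^ n * poch (4 / 3) n := by
    rw [pochPoly_eval, poch, ← prod_range_reflect, poch]
    rw [← card_range n, ← prod_const, card_range, ← prod_mul_distrib]
    refine prod_congr rfl fun i hi => ?_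
    rw [mem_range] at hi
    rw [show n - 1 - i = n - (i + 1) by omega, Nat.cast_sub (by omega)]
    push_cast
    ring
  rw [hr] at hQ
  have hQn : ∑ j ∈ range (n + 1), (-1 : ℂ) ^ j * n.choose j * Q.eval (j : ℂ) = 0 := by
    rcases Nat.eq_zero_or_pos n with rfl | hn
    · have : Q = 0 := by
        by_contra hne
        have h2 : (Polynomial.X - Polynomial.C (-((0 : ℕ) + 1 : ℂ))) * Q = 0 := by
          simpa [pochPoly, poch] using hQ
        exact hne ((mul_eq_zero.1 h2).resolve_left (Polynomial.X_sub_C_ne_zero _))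
      simp [this]
    · apply alt_sum_poly
      have h2 : (Polynomial.X - Polynomial.C (-(n + 1 : ℂ))) * Q =
          pochPoly (2 / 3) n - Polynomial.C ((-1) ^ n * poch (4 / 3) n) := by
        linear_combination -hQ
      have h3 := congrArg Polynomial.natDegree h2
      rw [Polynomial.natDegree_sub_C, pochPoly_natDegree] at h3
      rcases eq_or_ne Q 0 with rfl | hne
      · simpa using hn
      rw [Polynomial.natDegree_mul (Polynomial.X_sub_C_ne_zero _) hne,
        Polynomial.natDegree_X_sub_C] at h3
      omega
  have hterm : ∀ j : ℕ, (-1 : ℂ) ^ j * n.choose j *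
      (poch (2 / 3 + j) n * ((n + j).factorial / (j + n + 1).factorial)) =
      (-1 : ℂ) ^ j * n.choose j * Q.eval (j : ℂ) + (-1) ^ n * poch (4 / 3) n *
        ((-1 : ℂ) ^ j * n.choose j / ((n + 1 : ℕ) + j)) := by
    intro j
    have h2 := congrArg (Polynomial.eval (j : ℂ)) hQ
    rw [pochPoly_eval] at h2
    simp only [Polynomial.eval_add, Polynomial.eval_mul, Polynomial.eval_sub, Polynomial.eval_X,
      Polynomial.eval_C] at h2
    have h3 : ((n + 1 : ℕ) + j : ℂ) ≠ 0 := by exact_mod_cast (show n + 1 + j ≠ 0 by omega)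
    have h4 : ((n + j).factorial : ℂ) ≠ 0 := by exact_mod_cast Nat.factorial_ne_zero _
    have h5 : ((n + j).factorial : ℂ) / (j + n + 1).factorial = 1 / ((n + 1 : ℕ) + j) := by
      rw [show j + n + 1 = (n + j) + 1 by ring, Nat.factorial_succ]
      push_cast at h3 ⊢
      rw [div_eq_div_iff (mul_ne_zero (by convert h3 using 1; ring) h4) h3]
      ring
    rw [h5, h2]
    field_simp
    push_cast
    ring
  simp_rw [hterm]
  rw [sum_add_distrib, hQn, ← mul_sum, alt_sum_inv n (n + 1) (by omega), zero_add]
  have h6 := poch_natCast n (n + 1)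
  rw [show n + (n + 1) = 2 * n + 1 by ring] at h6
  rw [← h6]
  have h7 : (n.factorial : ℂ) ≠ 0 := by exact_mod_cast Nat.factorial_ne_zero _
  have h8 : ((-1 : ℂ) ^ n) * (-1) ^ n = 1 := by rw [← mul_pow]; simp
  rw [mul_div_assoc, mul_div_mul_right _ _ h7]
  linear_combination (1 / 3 * poch (4 / 3) n * (n.factorial / poch (n + 1 : ℕ) (n + 1))) * h8

/-- Multiplying the Hankel matrix by the lower triangular matrix of orthogonal polynomials makes it
upper triangular. -/
lemma det_hankel_mul (n : ℕ) :
    (∏ i ∈ range n, orth i i) * (hankel n).det = ∏ i ∈ range n,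
      (1 / 3 * poch (4 / 3) i * (i.factorial * i.factorial) / (2 * i + 1).factorial) := by
  let P : Matrix (Fin n) (Fin n) ℂ := Matrix.of fun i j => orth i j
  have hP0 : ∀ i j : ℕ, i < j → orth i j = 0 := by
    intro i j h
    simp [orth, Nat.choose_eq_zero_of_lt h]
  have hP : P.det = ∏ i ∈ range n, orth i i := by
    rw [Matrix.det_of_isLowerTriangular, prod_range]
    · rfl
    · intro i j hij
      exact hP0 i j hij
  have hmul : ∀ i k : Fin n, (P * hankel n) i k =
      ∑ j ∈ range ((i : ℕ) + 1), orth i j * coeff (j + k + 1) cbrt := by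
    intro i k
    rw [Matrix.mul_apply]
    simp only [P, hankel, Matrix.of_apply]
    rw [← sum_range (fun j => orth i j * coeff (j + k + 1) cbrt)]
    symm
    refine sum_subset (range_subset_range.2 i.2) fun j _ hj => ?_
    rw [mem_range] at hj
    rw [hP0 _ _ (by omega), zero_mul]
  rw [← hP, ← Matrix.det_mul, Matrix.det_of_isUpperTriangular, prod_range]
  · refine prod_congr rfl fun i _ => ?_
    rw [hmul, orth_sum_self]
  · intro i j hij
    rw [hmul]
    exact orth_sum_of_lt hij

lemma orth_self_ne_zero (n : ℕ) : orth n n ≠ 0 := by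
  rw [orth]
  have h1 := poch_two_thirds_ne_zero n
  simpa using ⟨Nat.factorial_ne_zero _, h1⟩

lemma factorial_three_mul (n : ℕ) :
    (27 : ℂ) ^ n * poch (4 / 3) n * poch (2 / 3) n * n.factorial = (3 * n + 1).factorial := by
  induction n with
  | zero => simp [poch]
  | succ n ih =>
    rw [show 3 * (n + 1) + 1 = 3 * n + 1 + 1 + 1 + 1 by ring]
    rw [Nat.factorial_succ n, Nat.factorial_succ (3 * n + 1 + 1 + 1),
      Nat.factorial_succ (3 * n + 1 + 1), Nat.factorial_succ (3 * n + 1), poch, poch,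
      prod_range_succ, prod_range_succ, ← poch, ← poch]
    push_cast
    rw [← ih]
    ring

lemma det_hankel (n : ℕ) :
    (∏ i ∈ range n, (3 : ℂ) * 27 ^ i) * (hankel n).det = ∏ i ∈ range n,
      ((i.factorial : ℂ) * (3 * i + 1).factorial /
        ((2 * i).factorial * (2 * i + 1).factorial)) := by
  have h := det_hankel_mul n
  have h0 : ∏ i ∈ range n, orth i i ≠ 0 := prod_ne_zero_iff.2 fun i _ => orth_self_ne_zero i
  apply mul_left_cancel₀ h0
  rw [mul_left_comm, h, ← prod_mul_distrib, ← prod_mul_distrib]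
  refine prod_congr rfl fun i _ => ?_
  rw [← factorial_three_mul, orth]
  have h1 := poch_two_thirds_ne_zero i
  have h2 : ((2 * i).factorial : ℂ) ≠ 0 := by exact_mod_cast Nat.factorial_ne_zero _
  have h3 : ((2 * i + 1).factorial : ℂ) ≠ 0 := by exact_mod_cast Nat.factorial_ne_zero _
  rw [← two_mul, Nat.choose_self]
  field_simp
  simp

/-- Both sides have the same successive quotients `n! / ((2n)! (2n+1)!)`. -/
lemma robbins_prod (n : ℕ) :
    ∏ k ∈ range n, ((k.factorial : ℚ) / ((2 * k).factorial * (2 * k + 1).factorial)) =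
      ∏ k ∈ range n, (1 / (n + k).factorial : ℚ) := by
  induction n with
  | zero => simp
  | succ n ih =>
    have h := prod_range_succ' (fun k => (1 / (n + k).factorial : ℚ)) (n + 1)
    rw [prod_range_succ, prod_range_succ, ← ih] at h
    rw [prod_range_succ]
    have e : ∏ k ∈ range (n + 1), (1 / (n + 1 + k).factorial : ℚ) =
        ∏ k ∈ range (n + 1), (1 / (n + (k + 1)).factorial : ℚ) :=
      prod_congr rfl fun k _ => by rw [add_right_comm, add_assoc]
    rw [e]
    have h1 : (n.factorial : ℚ) ≠ 0 := by positivity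
    have h2 : (1 / (n.factorial : ℚ)) ≠ 0 := by positivity
    rw [add_zero] at h
    apply mul_right_cancel₀ h2
    rw [← h, show n + (n + 1) = 2 * n + 1 by ring, ← two_mul]
    field_simp

end Robbins

/-- The determinant of the `(n+1) × (n+1)` symmetric matrix with `(i,k)` entry
`∑_{j=d}^{max(i,k)} C(2j-d, j-d)`, where `d = |i-k|` (the Riordan symmetrization of
the Riordan array `(1/((1-x)√(1-4x)), x c(x))`), equals the Robbins number
`A_{n+1} = ∏_{k=0}^{n} (3k+1)!/((n+1)+k)!`. -/
theorem robbins_det_riordan_symmetrization (n : ℕ) :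
    Matrix.det (Matrix.of fun i k : Fin (n + 1) =>
      ∑ j ∈ Finset.Icc (max (i : ℕ) (k : ℕ) - min (i : ℕ) (k : ℕ)) (max (i : ℕ) (k : ℕ)),
        (Nat.choose (2 * j - (max (i : ℕ) (k : ℕ) - min (i : ℕ) (k : ℕ)))
          (j - (max (i : ℕ) (k : ℕ) - min (i : ℕ) (k : ℕ))) : ℚ)) =
    ∏ k ∈ Finset.range (n + 1),
      (Nat.factorial (3 * k + 1) : ℚ) / (Nat.factorial ((n + 1) + k) : ℚ) := by
  have h := Robbins.det_ent n
  rw [Robbins.det_hankel] at h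
  have h2 : Matrix.det (Matrix.of fun i k : Fin (n + 1) => Robbins.ent i k) =
      ∏ i ∈ Finset.range (n + 1), ((i.factorial : ℚ) * (3 * i + 1).factorial /
        ((2 * i).factorial * (2 * i + 1).factorial)) := by
    apply (Rat.cast_injective : Function.Injective ((↑) : ℚ → ℂ))
    rw [h]
    push_cast
    rfl
  refine Eq.trans h2 ?_
  have h4 : ∀ i : ℕ, ((i.factorial : ℚ) * (3 * i + 1).factorial /
        ((2 * i).factorial * (2 * i + 1).factorial)) = (3 * i + 1).factorial *
        ((i.factorial : ℚ) / ((2 * i).factorial * (2 * i + 1).factorial)) := fun i => by ring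
  simp_rw [h4]
  rw [Finset.prod_mul_distrib, Robbins.robbins_prod, ← Finset.prod_mul_distrib]
  exact Finset.prod_congr rfl fun i _ => by ring
end

section
/- Let R be a commutative ring, a : ℕ → R a sequence, and r ∈ R. Define the r-th binomial transform b(n) = ∑_{k=0}^{n} C(n,k) r^{n−k} a(k). Then for every natural number n, det( b(i+j) )_{0≤i,j≤n} = det( a(i+j) )_{0≤i,j≤n}; that is, the Hankel transform of a sequence is invariant under the r-th binomial transform. -/
open Finset

/-!
Let `L : R[X] → R` be the linear functional with `L (X ^ k) = a k`. The binomial theorem says that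
`b m = L ((X + r) ^ m)`, so the Hankel matrix of `b` is the Gram matrix of the polynomials
`(X + r) ^ i` for the symmetric bilinear form `(p, q) ↦ L (p * q)`, while the Hankel matrix of `a`
is that of the monomials `X ^ i`. Hence `H_b = P * H_a * Pᵀ`, where `P` holds the coefficients of
the `(X + r) ^ i`; it is lower unitriangular, so `det P = 1`.
-/

/-- The linear functional on `R[X]` whose `k`-th moment, its value at `X ^ k`, is `a k`. -/
noncomputable def momentFunctional {R : Type*} [CommRing R] (a : ℕ → R) :
    Polynomial R →ₗ[R] R :=
  Polynomial.lsum fun k => LinearMap.mulRight R (a k)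

lemma momentFunctional_eq_sum {R : Type*} [CommRing R] (a : ℕ → R) (p : Polynomial R) {N : ℕ}
    (hp : p.natDegree < N) :
    momentFunctional a p = ∑ k ∈ Finset.range N, p.coeff k * a k := by
  simp only [momentFunctional, Polynomial.lsum_apply, LinearMap.mulRight_apply]
  exact Polynomial.sum_over_range' p (by simp) N hp

lemma momentFunctional_C_mul_X_pow {R : Type*} [CommRing R] (a : ℕ → R) (c : R) (k : ℕ) :
    momentFunctional a (Polynomial.C c * Polynomial.X ^ k) = c * a k := by
  rw [Polynomial.C_mul_X_pow_eq_monomial]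
  simp [momentFunctional, Polynomial.lsum_apply, Polynomial.sum_monomial_index]

/-- The bilinear form `(p, q) ↦ L (p * q)` has the Hankel matrix of `a` as its matrix in the
monomial basis. -/
lemma momentFunctional_mul {R : Type*} [CommRing R] (a : ℕ → R) (p q : Polynomial R) {N : ℕ}
    (hp : p.natDegree < N) (hq : q.natDegree < N) :
    momentFunctional a (p * q) =
      ∑ l : Fin N, ∑ k : Fin N, p.coeff k * a (k + l) * q.coeff l := by
  conv_lhs => rw [p.as_sum_range' N hp, q.as_sum_range' N hq]
  rw [Finset.sum_mul_sum, Finset.sum_comm, map_sum, ← Fin.sum_univ_eq_sum_range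
    (fun l => momentFunctional a (∑ k ∈ Finset.range N, _))]
  refine Finset.sum_congr rfl fun l _ => ?_
  rw [map_sum, ← Fin.sum_univ_eq_sum_range (fun k => momentFunctional a _)]
  refine Finset.sum_congr rfl fun k _ => ?_
  rw [Polynomial.monomial_mul_monomial, ← Polynomial.C_mul_X_pow_eq_monomial,
    momentFunctional_C_mul_X_pow]
  ring

/-- The Hankel transform is invariant under the `r`-th binomial transform:
if `b(n) = ∑_{k=0}^n C(n,k) r^{n-k} a(k)`, then for every `n`,
`det(b(i+j))_{0≤i,j≤n} = det(a(i+j))_{0≤i,j≤n}`. -/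
theorem hankel_transform_binomial_invariant (R : Type*) [CommRing R]
    (a b : ℕ → R) (r : R)
    (hb : ∀ m, b m = ∑ k ∈ Finset.range (m + 1),
      (Nat.choose m k : R) * r ^ (m - k) * a k) (n : ℕ) :
    Matrix.det (Matrix.of fun i j : Fin (n + 1) => b ((i : ℕ) + (j : ℕ))) =
      Matrix.det (Matrix.of fun i j : Fin (n + 1) => a ((i : ℕ) + (j : ℕ))) := by
  have hdeg (m : ℕ) : ((Polynomial.X + Polynomial.C r) ^ m).natDegree < m + 1 := by
    have h : (Polynomial.X + Polynomial.C r).natDegree ≤ 1 := by compute_degree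
    simpa [Nat.lt_succ_iff] using Polynomial.natDegree_pow_le_of_le m h
  have hbL (m : ℕ) : b m = momentFunctional a ((Polynomial.X + Polynomial.C r) ^ m) := by
    rw [hb, momentFunctional_eq_sum a _ (hdeg m)]
    refine Finset.sum_congr rfl fun k _ => ?_
    rw [Polynomial.coeff_X_add_C_pow, mul_comm (r ^ _)]
  let P : Matrix (Fin (n + 1)) (Fin (n + 1)) R :=
    Matrix.of fun i k => ((Polynomial.X + Polynomial.C r) ^ (i : ℕ)).coeff k
  have hP : P.det = 1 := by
    rw [Matrix.det_of_isLowerTriangular]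
    · simp [P, Polynomial.coeff_X_add_C_pow]
    · intro i k hik
      have : (i : ℕ) < k := hik
      simp [P, Polynomial.coeff_X_add_C_pow, Nat.choose_eq_zero_of_lt this]
  have hfac : (Matrix.of fun i j : Fin (n + 1) => b ((i : ℕ) + (j : ℕ))) =
      P * (Matrix.of fun i j : Fin (n + 1) => a ((i : ℕ) + (j : ℕ))) * P.transpose := by
    ext i j
    rw [Matrix.of_apply, hbL, pow_add, momentFunctional_mul (N := n + 1) a _ _
      ((hdeg i).trans_le (by omega)) ((hdeg j).trans_le (by omega))]
    simp [P, Matrix.mul_apply, Finset.sum_mul]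
  rw [hfac, Matrix.det_mul, Matrix.det_mul, Matrix.det_transpose, hP, one_mul, mul_one]
end

section
/- Let R be a commutative ring, a : ℕ → R a sequence, and r ∈ R. Define the INVERT(r) transform b of a recursively by b(n) = a(n) + r·∑_{k=0}^{n−1} a(k)·b(n−1−k) (so that the generating function of b is g/(1−r x g), where g is the generating function of a). Then for every natural number n, det( b(i+j) )_{0≤i,j≤n} = det( a(i+j) )_{0≤i,j≤n}; that is, the Hankel transform is invariant under the INVERT(r) transform. -/
open Finset

/-!
Splitting the convolution in the recursion for `b (i + j)` at `k = i` gives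
`b (i + j) - r ∑_{k<i} a (i-1-k) b (k + j) = a (i + j) + r ∑_{l<j} a (i + l) b (j-1-l)`.
The left side is a combination of row `i` of the Hankel matrix `B` of `b` with earlier rows, the
right side a combination of column `j` of the Hankel matrix `A` of `a` with earlier columns. Thus
`L * B = A * U` with `L` lower and `U` upper unitriangular, so `det B = det A`.
-/

/-- Multiplication by a row of a unitriangular matrix, whose entries are `f k` before the diagonal
position `i`, `1` at it and `0` after it. -/
theorem sum_unitriangular_row {R : Type*} [CommRing R] (f c : ℕ → R) {i N : ℕ} (hi : i < N) :
    ∑ k : Fin N, (if (k : ℕ) < i then f k else if (k : ℕ) = i then 1 else 0) * c k =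
      ∑ k ∈ range i, f k * c k + c i := by
  rw [Fin.sum_univ_eq_sum_range
    (fun k => (if k < i then f k else if k = i then 1 else 0) * c k) N]
  have hsub : range (i + 1) ⊆ range N := range_subset_range.2 hi
  rw [← sum_subset hsub, sum_range_succ]
  · congr 1
    · refine sum_congr rfl fun k hk => ?_
      rw [if_pos (mem_range.1 hk)]
    · simp
  · intro k _ hk
    rw [mem_range] at hk
    rw [if_neg (by omega), if_neg (by omega), zero_mul]

/-- The recursion for `b (i + j)` with the convolution split at `k = i`, and the first part
reversed so that its terms involve the rows `k < i`. -/
theorem invert_recursion_split {R : Type*} [CommRing R] (a b : ℕ → R) (r : R)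
    (hb : ∀ m, b m = a m + r * ∑ k ∈ range m, a k * b (m - 1 - k)) (i j : ℕ) :
    b (i + j) = a (i + j) + r * (∑ k ∈ range i, a (i - 1 - k) * b (k + j) +
      ∑ l ∈ range j, a (i + l) * b (j - 1 - l)) := by
  rw [hb (i + j), sum_range_add, ← sum_range_reflect]
  congr 3
  · refine sum_congr rfl fun k hk => ?_
    rw [mem_range] at hk
    congr 2
    omega
  · refine sum_congr rfl fun l hl => ?_
    congr 2
    omega

/-- The Hankel transform is invariant under the INVERT(`r`) transform:
if `b(n) = a(n) + r ∑_{k=0}^{n-1} a(k) b(n-1-k)` (so that the generating function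
of `b` is `g/(1 - r x g)` where `g` is that of `a`), then for every `n`,
`det(b(i+j))_{0≤i,j≤n} = det(a(i+j))_{0≤i,j≤n}`. -/
theorem hankel_transform_invert_invariant (R : Type*) [CommRing R]
    (a b : ℕ → R) (r : R)
    (hb : ∀ m, b m = a m + r * ∑ k ∈ Finset.range m, a k * b (m - 1 - k)) (n : ℕ) :
    Matrix.det (Matrix.of fun i j : Fin (n + 1) => b ((i : ℕ) + (j : ℕ))) =
      Matrix.det (Matrix.of fun i j : Fin (n + 1) => a ((i : ℕ) + (j : ℕ))) := by
  let L : Matrix (Fin (n + 1)) (Fin (n + 1)) R := Matrix.of fun i k =>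
    if (k : ℕ) < i then -(r * a (i - 1 - k)) else if (k : ℕ) = i then 1 else 0
  let U : Matrix (Fin (n + 1)) (Fin (n + 1)) R := Matrix.of fun l j =>
    if (l : ℕ) < j then r * b (j - 1 - l) else if (l : ℕ) = j then 1 else 0
  have hL : L.det = 1 := by
    rw [Matrix.det_of_isLowerTriangular]
    · simp [L]
    · intro i k hik
      have h : (i : ℕ) < k := hik
      simp only [L, Matrix.of_apply]
      rw [if_neg (by omega), if_neg (by omega)]
  have hU : U.det = 1 := by
    rw [Matrix.det_of_isUpperTriangular]
    · simp [U]
    · intro l j hlj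
      have h : (j : ℕ) < l := hlj
      simp only [U, Matrix.of_apply]
      rw [if_neg (by omega), if_neg (by omega)]
  have key : L * (Matrix.of fun i j : Fin (n + 1) => b ((i : ℕ) + (j : ℕ))) =
      (Matrix.of fun i j : Fin (n + 1) => a ((i : ℕ) + (j : ℕ))) * U := by
    ext i j
    have h1 := sum_unitriangular_row (fun k => -(r * a (i - 1 - k))) (fun k => b (k + j)) i.isLt
    have h2 := sum_unitriangular_row (fun l => r * b (j - 1 - l)) (fun l => a (i + l)) j.isLt
    simp only [Matrix.mul_apply, L, U, Matrix.of_apply]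
    rw [h1]
    simp_rw [mul_comm (a _)]
    rw [h2, invert_recursion_split a b r hb i j, mul_add, mul_sum, mul_sum]
    have e1 : ∑ k ∈ range (i : ℕ), -(r * a (i - 1 - k)) * b (k + j) =
        -∑ k ∈ range (i : ℕ), r * (a (i - 1 - k) * b (k + j)) := by
      rw [← sum_neg_distrib]
      exact sum_congr rfl fun k _ => by ring
    have e2 : ∑ l ∈ range (j : ℕ), r * b (j - 1 - l) * a (i + l) =
        ∑ l ∈ range (j : ℕ), r * (a (i + l) * b (j - 1 - l)) :=
      sum_congr rfl fun l _ => by ring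
    rw [e1, e2]
    ring
  simpa only [Matrix.det_mul, hL, hU, one_mul, mul_one] using congrArg Matrix.det key
end

section
/- For every natural number n, ∑_{k=0}^{n} ∑_{m=0}^{min(k, n−k)} C(n−2m, k−m) = ⌊2^{n+2}/3⌋. (The left side is the n-th diagonal sum of the matrix with bivariate generating function 1/((1−xy)(1−x−y)), and the right side is the sequence with generating function 1/((1−x²)(1−2x)).) -/
/-!
Write `S n` for the diagonal sum. Its `m = 0` terms form a full row of Pascal's triangle and add up
to `2 ^ n`. The remaining terms of `S (n + 2)`, after the shift `(k, m) ↦ (k + 1, m + 1)`, are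
exactly those of `S n`; hence `S (n + 2) = 2 ^ (n + 2) + S n`. The right-hand side satisfies the
same recurrence because `2 ^ (n + 4) = 3 * 2 ^ (n + 2) + 2 ^ (n + 2)`.
-/

open Finset

/-- Splitting off the `m = 0` term at an interior position of the diagonal `n + 2`. -/
lemma inner_sum_succ (n k : ℕ) (hk : k ≤ n) :
    ∑ m ∈ Finset.range (min (k + 1) (n + 2 - (k + 1)) + 1),
        Nat.choose (n + 2 - 2 * m) (k + 1 - m) =
      ∑ m ∈ Finset.range (min k (n - k) + 1), Nat.choose (n - 2 * m) (k - m) +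
        Nat.choose (n + 2) (k + 1) := by
  have h : min (k + 1) (n + 2 - (k + 1)) = min k (n - k) + 1 := by omega
  rw [h, Finset.sum_range_succ']
  congr 1
  refine Finset.sum_congr rfl fun m _ => ?_
  congr 1 <;> omega

lemma diagonal_sum_add_two (n : ℕ) :
    ∑ k ∈ Finset.range (n + 2 + 1), ∑ m ∈ Finset.range (min k (n + 2 - k) + 1),
        Nat.choose (n + 2 - 2 * m) (k - m) =
      2 ^ (n + 2) + ∑ k ∈ Finset.range (n + 1), ∑ m ∈ Finset.range (min k (n - k) + 1),
        Nat.choose (n - 2 * m) (k - m) := by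
  have hrow := Nat.sum_range_choose (n + 2)
  -- At the two ends `k = 0` and `k = n + 2` only the term `m = 0` is present.
  rw [Finset.sum_range_succ, Finset.sum_range_succ'] at hrow ⊢
  rw [Finset.sum_congr rfl fun k hk =>
    inner_sum_succ n k (Nat.lt_succ_iff.mp (Finset.mem_range.mp hk)), Finset.sum_add_distrib]
  simp at hrow ⊢
  omega

/-- The `n`-th diagonal sum of the matrix with generating function
`1/((1-xy)(1-x-y))` equals `⌊2^{n+2}/3⌋` (sequence A000975):
`∑_{k=0}^{n} ∑_{m=0}^{min(k,n-k)} C(n-2m, k-m) = ⌊2^{n+2}/3⌋`. -/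
theorem diagonal_sums_eq_A000975 (n : ℕ) :
    ∑ k ∈ Finset.range (n + 1), ∑ m ∈ Finset.range (min k (n - k) + 1),
        Nat.choose (n - 2 * m) (k - m) =
      2 ^ (n + 2) / 3 := by
  induction n using Nat.twoStepInduction with
  | zero => decide
  | one => decide
  | more n ih _ =>
    rw [diagonal_sum_add_two, ih]
    have h : 2 ^ (n + 2 + 2) = 3 * 2 ^ (n + 2) + 2 ^ (n + 2) := by ring
    omega
end
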